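/- Let Δ be a Cohen-Macaulay simplicial forest on vertex set V(Δ) and let R = K[x_v : v ∈ V(Δ)]. For 1 ≤ k ≤ ν(Δ), let d_k denote the minimum degree of a minimal monomial generator of I(Δ)^{[k]}, and set g(k) = depth(R/I(Δ)^{[k]}) − (d_k − 1). Then the normalized depth function g is nonincreasing, i.e. g(k+1) ≤ g(k) for all 1 ≤ k ≤ ν(Δ) − 1. -/

import Mathlib

open MvPolynomial

/-- A simplicial complex on the vertex set `V`, presented by its set of facets
(the maximal faces).  Every facet is nonempty and no facet contains another. -/
structure SimplicialComplexOn (V : Type) [Fintype V] [DecidableEq V] : Type where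
  facets : Finset (Finset V)
  nonempty_facet : ∀ F ∈ facets, F.Nonempty
  antichain : ∀ F ∈ facets, ∀ G ∈ facets, F ⊆ G → F = G

variable {V : Type} [Fintype V] [DecidableEq V]

/-- `F` is a leaf of the collection of facets `S`: either `F` is the only facet, or
there is a facet `G ≠ F` (a joint) with `F ∩ H ⊆ F ∩ G` for every facet `H ≠ F`. -/
def IsLeafOf (S : Finset (Finset V)) (F : Finset V) : Prop :=
  F ∈ S ∧ ((∀ H ∈ S, H = F) ∨
    ∃ G ∈ S, G ≠ F ∧ ∀ H ∈ S, H ≠ F → F ∩ H ⊆ F ∩ G)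

/-- The forest property for a facet collection: every nonempty subcollection
(i.e. every nonempty subcomplex) has a leaf. -/
def HasLeafProp (S : Finset (Finset V)) : Prop :=
  ∀ T ⊆ S, T.Nonempty → ∃ F, IsLeafOf T F

/-- A good leaf: a facet which is a leaf of every subcomplex containing it. -/
def IsGoodLeafOf (S : Finset (Finset V)) (F : Finset V) : Prop :=
  F ∈ S ∧ ∀ T ⊆ S, F ∈ T → IsLeafOf T F

/-- A special leaf: a leaf `F` such that for all facets `H, H' ≠ F`,
`H ∩ H' ≠ ∅` iff `(H ∩ H') \ F ≠ ∅`. -/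
def IsSpecialLeafOf (S : Finset (Finset V)) (F : Finset V) : Prop :=
  IsLeafOf S F ∧ ∀ H ∈ S, ∀ H' ∈ S, H ≠ F → H' ≠ F →
    ((H ∩ H').Nonempty ↔ ((H ∩ H') \ F).Nonempty)

/-- A matching: a subcollection of the facets that is pairwise disjoint. -/
def IsMatchingOf (S : Finset (Finset V)) (M : Finset (Finset V)) : Prop :=
  M ⊆ S ∧ ∀ F ∈ M, ∀ G ∈ M, F ≠ G → F ∩ G = ∅

/-- The matching number: maximum size of a matching. -/
noncomputable def matchingNumberOf (S : Finset (Finset V)) : ℕ :=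
  sSup {n | ∃ M : Finset (Finset V), IsMatchingOf S M ∧ M.card = n}

/-- The facet collection `S` is grafted: it decomposes as `Fs ∪ Gs` where
(1) every vertex of a `G ∈ Gs` lies in some `F ∈ Fs`, (2) `Fs` is exactly the set
of leaves of `S`, (3) `Fs` and `Gs` are disjoint, (4) the members of `Fs` are
pairwise disjoint, and (5) for each `G ∈ Gs`, deleting the facet `G` leaves a
grafted collection. -/
inductive IsGrafted : Finset (Finset V) → Prop where
  | intro (S Fs Gs : Finset (Finset V))
      (hunion : S = Fs ∪ Gs)
      (hdisj : Disjoint Fs Gs)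
      (hcover : ∀ G ∈ Gs, ∀ v ∈ G, ∃ F ∈ Fs, v ∈ F)
      (hleaves : ∀ F, IsLeafOf S F ↔ F ∈ Fs)
      (hFdisj : ∀ F ∈ Fs, ∀ F' ∈ Fs, F ≠ F' → F ∩ F' = ∅)
      (hrec : ∀ G ∈ Gs, IsGrafted (S.erase G)) :
      IsGrafted S

/-- `S` is the (minimal presentation of the) grafting of the collection `Gs`
with the simplices `Fs`. -/
def IsGraftingDecomp (S Fs Gs : Finset (Finset V)) : Prop :=
  S = Fs ∪ Gs ∧ Disjoint Fs Gs ∧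
  (∀ G ∈ Gs, ∀ v ∈ G, ∃ F ∈ Fs, v ∈ F) ∧
  (∀ F, IsLeafOf S F ↔ F ∈ Fs) ∧
  (∀ F ∈ Fs, ∀ F' ∈ Fs, F ≠ F' → F ∩ F' = ∅) ∧
  (∀ G ∈ Gs, IsGrafted (S.erase G))

/-- A Cohen-Macaulay simplicial forest, combinatorially: a grafted simplicial forest. -/
def IsCMForestFacets (S : Finset (Finset V)) : Prop :=
  HasLeafProp S ∧ IsGrafted S

/-- The closed neighborhood `N[F] = {F} ∪ {G ∈ S : G ≠ F, G ∩ F ≠ ∅}`. -/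
def closedNbhd (S : Finset (Finset V)) (F : Finset V) : Finset (Finset V) :=
  insert F (S.filter fun G => G ≠ F ∧ (G ∩ F).Nonempty)

/-- The contraction of the facet collection `S` on `A`: the minimal members of
`{F \ A : F ∈ S}`. -/
def contraction (S : Finset (Finset V)) (A : Finset V) : Finset (Finset V) :=
  (S.image fun F => F \ A).filter fun F' => ∀ G ∈ S, G \ A ⊆ F' → G \ A = F'

variable (K : Type) [Field K]

/-- The square-free monomial `x_S = ∏_{v ∈ S} x_v`. -/
noncomputable def xMon (S : Finset V) : MvPolynomial V K := ∏ v ∈ S, X v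

/-- The facet ideal `I(Δ) = ⟨x_F : F a facet⟩`. -/
noncomputable def facetIdealOf (S : Finset (Finset V)) : Ideal (MvPolynomial V K) :=
  Ideal.span { p | ∃ F ∈ S, p = xMon K F }

/-- The `k`-th square-free power of an ideal: the ideal generated by all
square-free monomials lying in `I ^ k`. -/
noncomputable def sqfreePow (I : Ideal (MvPolynomial V K)) (k : ℕ) :
    Ideal (MvPolynomial V K) :=
  Ideal.span { p | (∃ S : Finset V, p = xMon K S) ∧ p ∈ I ^ k }

/-- The depth of `R/I` with respect to the homogeneous maximal ideal
`m = ⟨x_v : v ∈ V⟩`: the largest length of an `R/I`-regular sequence of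
elements of `m`. -/
noncomputable def gradedDepth (I : Ideal (MvPolynomial V K)) : ℕ :=
  sSup {n | ∃ rs : List (MvPolynomial V K), rs.length = n ∧
    (∀ r ∈ rs, r ∈ Ideal.span (Set.range (X : V → MvPolynomial V K))) ∧
    RingTheory.Sequence.IsRegular (MvPolynomial V K ⧸ I) rs}

/-- `R/I` is Cohen-Macaulay: its depth equals its Krull dimension. -/
def IsCMQuot (I : Ideal (MvPolynomial V K)) : Prop :=
  ((gradedDepth K I : ℕ∞) : WithBot ℕ∞) = ringKrullDim (MvPolynomial V K ⧸ I)

section Statements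

variable {V : Type} [Fintype V] [DecidableEq V] (K : Type) [Field K]

/-- The minimum degree of a (minimal monomial) generator of a monomial ideal,
equivalently the least total degree of a monomial lying in the ideal. -/
noncomputable def minGenDegree (I : Ideal (MvPolynomial V K)) : ℕ :=
  sInf {n | ∃ s : V →₀ ℕ, (monomial s (1 : K)) ∈ I ∧ s.sum (fun _ e => e) = n}

/-!
Let `Δ` be grafted with leaves `F_1, …, F_r`. Then `depth R/I(Δ)^[k] = |V| - r + k - 1`, so the
depth grows by one with `k`, while the least degree of a generator grows by at least one since
removing a facet from a matching of size `k + 1` leaves a matching of size `k`.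

For the depth formula, `R/I(Δ)^[k]` has a prime filtration whose factors are all of the form
`R/⟨x_v : v ∈ C⟩` with `|C| = r + 1 - k`. It is obtained by splitting off the colon ideals by
square-free monomials: colons by a minimal facet inside a leaf `Q` delete the facets meeting `Q` and
lower `k`, colons by the other monomials in the variables of `Q` contract `Q` and add one variable
to the ideal. Contraction is harmless for matchings if any two facets that meet, neither of them
inside `Q`, also meet outside `Q`; such a `Q` exists in every grafted forest.

If all factors have `|C| = c`, the elementary symmetric polynomials `e_d, …, e_1` with
`d = |V| - c` form a regular sequence on every factor, hence on the filtered quotient: modulo the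
variables in `C`, `e_d` is the product of the remaining ones, and adding this product to the ideal
leaves a quotient with a prime filtration whose factors have `|C| = c + 1`. Conversely every prime
containing the ideal contains `c` variables, so the Krull dimension, and with it the depth, is at
most `d`.
-/

section Leaves

variable {α β : Type} [DecidableEq α] [DecidableEq β]

theorem IsLeafOf.exists_joint {S : Finset (Finset α)} {F : Finset α} (h : IsLeafOf S F)
    (hS : S.Nontrivial) : ∃ G ∈ S, G ≠ F ∧ ∀ H ∈ S, H ≠ F → F ∩ H ⊆ G := by
  obtain ⟨-, honly | ⟨G, hG, hGF, hjoint⟩⟩ := h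
  · obtain ⟨H, hH, hHF⟩ := hS.exists_ne F
    exact absurd (honly H hH) hHF
  · exact ⟨G, hG, hGF, fun H hH hHF => (hjoint H hH hHF).trans Finset.inter_subset_right⟩

theorem HasLeafProp.mono {S T : Finset (Finset α)} (h : HasLeafProp S) (hT : T ⊆ S) :
    HasLeafProp T :=
  fun U hU => h U (hU.trans hT)

theorem HasLeafProp.image {S : Finset (Finset α)} (h : HasLeafProp S) (f : Finset α → Finset β)
    (hf : ∀ F ∈ S, ∀ H ∈ S, ∀ G ∈ S, F ∩ H ⊆ F ∩ G → f F ∩ f H ⊆ f F ∩ f G) :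
    HasLeafProp (S.image f) := by
  intro T hT hne
  have hpre : ∀ E ∈ T, ∃ F ∈ S, f F = E := fun E hE => Finset.mem_image.1 (hT hE)
  choose! g hgS hfg using hpre
  obtain ⟨F, hF, hleaf⟩ := h (T.image g) (Finset.image_subset_iff.2 hgS) (hne.image g)
  obtain ⟨E, hE, rfl⟩ := Finset.mem_image.1 hF
  refine ⟨E, hE, hleaf.imp (fun honly H hH => ?_) ?_⟩
  · rw [← hfg H hH, ← hfg E hE, honly (g H) (Finset.mem_image_of_mem g hH)]
  · rintro ⟨G, hG, hGF, hjoint⟩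
    obtain ⟨E', hE', rfl⟩ := Finset.mem_image.1 hG
    refine ⟨E', hE', fun heq => hGF (heq ▸ rfl), fun H hH hHE => ?_⟩
    have hne : g H ≠ g E := fun heq => hHE (by rw [← hfg H hH, heq, hfg E hE])
    have := hf (g E) (hgS E hE) (g H) (hgS H hH) (g E') (hgS E' hE')
      (hjoint (g H) (Finset.mem_image_of_mem g hH) hne)
    rwa [hfg E hE, hfg H hH, hfg E' hE'] at this

theorem HasLeafProp.exists_leaf_ne {T : Finset (Finset α)} (h : HasLeafProp T)
    (hT : T.Nontrivial) {J : Finset α} (hJ : J ∈ T) :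
    ∃ L ∈ T, L ≠ J ∧ ∃ G ∈ T, G ≠ L ∧ ∀ H ∈ T, H ≠ L → L ∩ H ⊆ G := by
  induction T using Finset.strongInduction generalizing J with
  | H T ih =>
  obtain ⟨L, hL⟩ := h T subset_rfl hT.nonempty
  obtain ⟨G, hG, hGL, hjoint⟩ := hL.exists_joint hT
  obtain rfl | hLJ := eq_or_ne L J
  swap
  · exact ⟨L, hL.1, hLJ, G, hG, hGL, hjoint⟩
  have hGe : G ∈ T.erase L := Finset.mem_erase.2 ⟨hGL, hG⟩
  obtain htriv | hnontriv := Finset.eq_singleton_or_nontrivial hGe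
  · refine ⟨G, hG, hGL, L, hJ, hGL.symm, fun H hH hHG => ?_⟩
    have hHL : H = L := by
      by_contra hne
      exact hHG (Finset.mem_singleton.1 (htriv ▸ Finset.mem_erase.2 ⟨hne, hH⟩))
    exact hHL ▸ Finset.inter_subset_right
  · obtain ⟨L', hL', hL'G, G', hG', hG'L', hjoint'⟩ := ih _ (Finset.erase_ssubset hJ)
      (h.mono (Finset.erase_subset _ _)) hnontriv hGe
    obtain ⟨hL'L, hL'T⟩ := Finset.mem_erase.1 hL'
    refine ⟨L', hL'T, hL'L, G', Finset.mem_of_mem_erase hG', hG'L', fun H hH hHL' => ?_⟩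
    obtain rfl | hHL := eq_or_ne H L
    · have hsub : H ∩ L' ⊆ G := hjoint L' hL'T hL'L
      rw [Finset.inter_comm]
      exact (Finset.subset_inter Finset.inter_subset_right hsub).trans
        (hjoint' G hGe hL'G.symm)
    · exact hjoint' H (Finset.mem_erase.2 ⟨hHL, hH⟩) hHL'

/-- `b` is a nest point of the traces on `B` of the family `E`: the traces on `B` of the members
of `E` through `b` form a chain. -/
def IsNestPoint (E : Finset (Finset α)) (B : Finset α) (b : α) : Prop :=
  b ∈ B ∧ ∀ e ∈ E, ∀ e' ∈ E, b ∈ e → b ∈ e' → e ∩ B ⊆ e' ∨ e' ∩ B ⊆ e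

theorem IsNestPoint.of_forall_subset {E : Finset (Finset α)} {B L : Finset α} {b : α}
    (h : IsNestPoint E L b) (hLB : L ⊆ B) (hE : ∀ e ∈ E, b ∈ e → B ⊆ e ∨ e ∩ B ⊆ L) :
    IsNestPoint E B b := by
  refine ⟨hLB h.1, fun e he e' he' hbe hbe' => ?_⟩
  obtain hBe | heL := hE e he hbe
  · exact .inr (Finset.inter_subset_right.trans hBe)
  obtain hBe' | heL' := hE e' he' hbe'
  · exact .inl (Finset.inter_subset_right.trans hBe')
  exact (h.2 e he e' he' hbe hbe').imp
    (fun hsub => (Finset.subset_inter Finset.inter_subset_left heL).trans hsub)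
    (fun hsub => (Finset.subset_inter Finset.inter_subset_left heL').trans hsub)

open scoped Classical in
/-- The maximal members of the family of proper subsets of `B` cut out on `B` by the members
of `E`. -/
noncomputable def maximalProperTraces (E : Finset (Finset α)) (B : Finset α) :
    Finset (Finset α) :=
  ((E.image (· ∩ B)).erase B).filter (Maximal (· ∈ (E.image (· ∩ B)).erase B))

theorem mem_maximalProperTraces {E : Finset (Finset α)} {B M : Finset α} :
    M ∈ maximalProperTraces E B ↔ Maximal (· ∈ (E.image (· ∩ B)).erase B) M := by
  classical
  rw [maximalProperTraces, Finset.mem_filter]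
  exact and_iff_right_of_imp Maximal.prop

theorem ssubset_of_mem_maximalProperTraces {E : Finset (Finset α)} {B M : Finset α}
    (hM : M ∈ maximalProperTraces E B) : M ⊂ B := by
  obtain ⟨hMB, hME⟩ := Finset.mem_erase.1 (mem_maximalProperTraces.1 hM).prop
  obtain ⟨e, -, rfl⟩ := Finset.mem_image.1 hME
  exact Finset.inter_subset_right.ssubset_of_ne hMB

theorem exists_mem_maximalProperTraces {E : Finset (Finset α)} {B e : Finset α} (he : e ∈ E)
    (hBe : ¬ B ⊆ e) : ∃ M ∈ maximalProperTraces E B, e ∩ B ⊆ M := by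
  have hmem : e ∩ B ∈ (E.image (· ∩ B)).erase B :=
    Finset.mem_erase.2 ⟨fun h => hBe (Finset.inter_eq_right.1 h), Finset.mem_image_of_mem _ he⟩
  obtain ⟨M, heM, hM⟩ := Finset.exists_le_maximal _ hmem
  exact ⟨M, mem_maximalProperTraces.2 hM, heM⟩

theorem hasLeafProp_maximalProperTraces {E : Finset (Finset α)} (hE : HasLeafProp E)
    (B : Finset α) : HasLeafProp (maximalProperTraces E B) := by
  refine (hE.image (· ∩ B) fun F _ H _ G _ h => ?_).mono
    fun M hM => Finset.mem_of_mem_erase (mem_maximalProperTraces.1 hM).prop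
  simpa only [← Finset.inter_inter_distrib_right] using Finset.inter_subset_inter_right h

-- Descend into a leaf `L` of the maximal proper traces, away from its joint: every trace through a
-- point of `L` off the joint is either all of `B` or contained in `L`.
theorem HasLeafProp.exists_isNestPoint_notMem {E : Finset (Finset α)} (hE : HasLeafProp E)
    {B J : Finset α} (hJ : J ∈ E) (hBJ : ¬ B ⊆ J) : ∃ b ∉ J, IsNestPoint E B b := by
  induction B using Finset.strongInduction generalizing J with
  | H B ih =>
  obtain ⟨J₀, hJ₀, hJJ₀⟩ := exists_mem_maximalProperTraces hJ hBJ
  obtain hsingle | hnontriv := Finset.eq_singleton_or_nontrivial hJ₀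
  · obtain ⟨b, hbB, hbJ₀⟩ := Finset.exists_of_ssubset (ssubset_of_mem_maximalProperTraces hJ₀)
    have hsub : ∀ e ∈ E, b ∈ e → B ⊆ e := by
      intro e he hbe
      by_contra hBe
      obtain ⟨m, hm, hem⟩ := exists_mem_maximalProperTraces he hBe
      rw [hsingle, Finset.mem_singleton] at hm
      exact hbJ₀ (hm ▸ hem (Finset.mem_inter.2 ⟨hbe, hbB⟩))
    exact ⟨b, fun hbJ => hbJ₀ (hJJ₀ (Finset.mem_inter.2 ⟨hbJ, hbB⟩)), hbB,
      fun e _ e' he' _ hbe' => .inl (Finset.inter_subset_right.trans (hsub e' he' hbe'))⟩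
  obtain ⟨L, hL, hLJ₀, G, hG, hGL, hjoint⟩ :=
    (hasLeafProp_maximalProperTraces hE B).exists_leaf_ne hnontriv hJ₀
  obtain ⟨e, he, rfl⟩ :=
    Finset.mem_image.1 (Finset.mem_of_mem_erase (mem_maximalProperTraces.1 hG).prop)
  have hLB := ssubset_of_mem_maximalProperTraces hL
  have hLe : ¬ L ⊆ e := fun h => hGL <| ((mem_maximalProperTraces.1 hL).eq_of_le
    (mem_maximalProperTraces.1 hG).prop (Finset.subset_inter h hLB.subset)).symm
  obtain ⟨b, hbe, hb⟩ := ih L hLB he hLe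
  have eq_of_mem : ∀ m ∈ maximalProperTraces E B, b ∈ m → m = L := by
    intro m hm hbm
    by_contra hmL
    exact hbe (Finset.mem_inter.1 (hjoint m hm hmL (Finset.mem_inter.2 ⟨hb.1, hbm⟩))).1
  refine ⟨b, fun hbJ => hLJ₀ ?_, hb.of_forall_subset hLB.subset fun e' he' hbe' => ?_⟩
  · exact (eq_of_mem J₀ hJ₀ (hJJ₀ (Finset.mem_inter.2 ⟨hbJ, hLB.subset hb.1⟩))).symm
  · refine or_iff_not_imp_left.2 fun hBe' => ?_
    obtain ⟨m, hm, hem⟩ := exists_mem_maximalProperTraces he' hBe'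
    exact eq_of_mem m hm (hem (Finset.mem_inter.2 ⟨hbe', hLB.subset hb.1⟩)) ▸ hem

theorem HasLeafProp.exists_isNestPoint {E : Finset (Finset α)} (hE : HasLeafProp E) {B : Finset α}
    (hB : B.Nonempty) : ∃ b, IsNestPoint E B b := by
  by_cases h : ∃ J ∈ E, ¬ B ⊆ J
  · obtain ⟨J, hJ, hBJ⟩ := h
    obtain ⟨b, -, hb⟩ := hE.exists_isNestPoint_notMem hJ hBJ
    exact ⟨b, hb⟩
  · push Not at h
    exact ⟨hB.choose, hB.choose_spec,
      fun e _ e' he' _ _ => .inl (Finset.inter_subset_right.trans (h e' he'))⟩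

end Leaves

section GraftedForests

variable {α : Type} [DecidableEq α]

theorem IsLeafOf.exists_free_vertex {S : Finset (Finset α)} {F : Finset α} (h : IsLeafOf S F)
    (hS : IsAntichain (· ⊆ ·) (S : Set (Finset α))) (hF : F.Nonempty) :
    ∃ v ∈ F, ∀ H ∈ S, v ∈ H → H = F := by
  obtain ⟨hFS, honly | ⟨G, hG, hGF, hjoint⟩⟩ := h
  · exact ⟨hF.choose, hF.choose_spec, fun H hH _ => honly H hH⟩
  · obtain ⟨v, hvF, hvG⟩ := Finset.not_subset.1 (hS hFS hG hGF.symm)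
    refine ⟨v, hvF, fun H hH hvH => ?_⟩
    by_contra hHF
    exact hvG (Finset.mem_inter.1 (hjoint H hH hHF (Finset.mem_inter.2 ⟨hvF, hvH⟩))).2

theorem IsGrafted.exists_isLeafOf_mem {S : Finset (Finset α)} (h : IsGrafted S) {H : Finset α}
    (hH : H ∈ S) {v : α} (hv : v ∈ H) : ∃ F, IsLeafOf S F ∧ v ∈ F := by
  obtain ⟨-, Fs, Gs, rfl, -, hcover, hleaves, -, -⟩ := h
  obtain hHF | hHG := Finset.mem_union.1 hH
  · exact ⟨H, (hleaves H).2 hHF, hv⟩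
  · obtain ⟨F, hF, hvF⟩ := hcover H hHG v hv
    exact ⟨F, (hleaves F).2 hF, hvF⟩

theorem IsGrafted.disjoint_of_isLeafOf {S : Finset (Finset α)} (h : IsGrafted S) {F F' : Finset α}
    (hF : IsLeafOf S F) (hF' : IsLeafOf S F') (hne : F ≠ F') : Disjoint F F' := by
  obtain ⟨-, Fs, Gs, rfl, -, -, hleaves, hdisj, -⟩ := h
  exact Finset.disjoint_iff_inter_eq_empty.2
    (hdisj F ((hleaves F).1 hF) F' ((hleaves F').1 hF') hne)

theorem IsGrafted.isLeafOf_of_subset {S T : Finset (Finset α)} (hT : IsGrafted T) (hTS : T ⊆ S)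
    (hS : IsAntichain (· ⊆ ·) (S : Set (Finset α))) {F : Finset α} (hF : IsLeafOf S F)
    (hne : F.Nonempty) (hFT : F ∈ T) : IsLeafOf T F := by
  obtain ⟨v, hvF, hv⟩ := hF.exists_free_vertex hS hne
  obtain ⟨F', hF', hvF'⟩ := hT.exists_isLeafOf_mem hFT hvF
  exact hv F' (hTS hF'.1) hvF' ▸ hF'

-- The chain property of the traces on a leaf `F` is transported from `S.erase J`, with `J` a joint
-- of `F`, because `J` itself has the largest trace on `F`.
theorem IsGrafted.inter_subset_or {S : Finset (Finset α)} (h : IsGrafted S)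
    (hS : IsAntichain (· ⊆ ·) (S : Set (Finset α))) {F : Finset α} (hF : IsLeafOf S F)
    (hne : F.Nonempty) {H H' : Finset α} (hH : H ∈ S) (hH' : H' ∈ S) :
    F ∩ H ⊆ H' ∨ F ∩ H' ⊆ H := by
  induction h with
  | intro S Fs Gs hunion _ _ hleaves hFdisj hrec ih =>
  obtain rfl | hHF := eq_or_ne H F
  · exact .inr Finset.inter_subset_left
  obtain rfl | hHF' := eq_or_ne H' F
  · exact .inl Finset.inter_subset_left
  obtain ⟨J, hJ, hJF, hjoint⟩ := hF.exists_joint ⟨H, hH, F, hF.1, hHF⟩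
  obtain rfl | hHJ := eq_or_ne H J
  · exact .inr (hjoint H' hH' hHF')
  obtain rfl | hHJ' := eq_or_ne H' J
  · exact .inl (hjoint H hH hHF)
  obtain hJF' | hJG := Finset.mem_union.1 (hunion ▸ hJ)
  · have hFJ : F ∩ J = ∅ := hFdisj F ((hleaves F).1 hF) J hJF' hJF.symm
    have hFH : F ∩ H ⊆ F ∩ J := Finset.subset_inter Finset.inter_subset_left (hjoint H hH hHF)
    exact .inl ((hFH.trans hFJ.subset).trans (Finset.empty_subset _))
  · have hsub := Finset.erase_subset J S
    exact ih J hJG (hS.subset (Finset.coe_subset.2 hsub))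
      ((hrec J hJG).isLeafOf_of_subset hsub hS hF hne (Finset.mem_erase.2 ⟨hJF.symm, hF.1⟩))
      (Finset.mem_erase.2 ⟨hHJ, hH⟩) (Finset.mem_erase.2 ⟨hHJ', hH'⟩)

/-- `T` is a forest grafted over the pairwise disjoint sets in `P`: these cover the vertices of
`T`, each of them contains a member of `T`, and the members of `T` cut out a chain on each of them.
Unlike for grafted complexes, `T` may fail to be an antichain, which makes the notion stable under
deleting and contracting a part `Q ∈ P`. -/
structure IsGraftedOver (P T : Finset (Finset α)) : Prop where
  pairwiseDisjoint : (P : Set (Finset α)).PairwiseDisjoint id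
  exists_subset : ∀ Q ∈ P, ∃ H ∈ T, H ⊆ Q
  exists_mem : ∀ H ∈ T, ∀ v ∈ H, ∃ Q ∈ P, v ∈ Q
  inter_subset_or : ∀ Q ∈ P, ∀ H ∈ T, ∀ H' ∈ T, Q ∩ H ⊆ H' ∨ Q ∩ H' ⊆ H
  nonempty : ∀ H ∈ T, H.Nonempty
  hasLeafProp : HasLeafProp T

theorem IsCMForestFacets.exists_isGraftedOver {S : Finset (Finset α)} (h : IsCMForestFacets S)
    (hS : IsAntichain (· ⊆ ·) (S : Set (Finset α))) (hne : ∀ F ∈ S, F.Nonempty) :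
    ∃ P, IsGraftedOver P S := by
  classical
  obtain ⟨hforest, hgrafted⟩ := h
  have mem_leaves : ∀ F, F ∈ S.filter (IsLeafOf S) ↔ IsLeafOf S F := fun F =>
    Finset.mem_filter.trans (and_iff_right_of_imp And.left)
  refine ⟨S.filter (IsLeafOf S), ?_, fun Q hQ => ?_, fun H hH v hv => ?_,
    fun Q hQ H hH H' hH' => ?_, hne, hforest⟩
  · intro F hF F' hF' hFF'
    exact hgrafted.disjoint_of_isLeafOf ((mem_leaves F).1 hF) ((mem_leaves F').1 hF') hFF'
  · exact ⟨Q, ((mem_leaves Q).1 hQ).1, subset_rfl⟩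
  · obtain ⟨F, hF, hvF⟩ := hgrafted.exists_isLeafOf_mem hH hv
    exact ⟨F, (mem_leaves F).2 hF, hvF⟩
  · have hQ := (mem_leaves Q).1 hQ
    exact hgrafted.inter_subset_or hS hQ (hne Q hQ.1) hH hH'

/-- `Q` is special for `T` if two members of `T` that meet, neither of them inside `Q`, also meet
outside `Q`. Contracting a special set preserves and reflects matchings. -/
def IsSpecialFor (T : Finset (Finset α)) (Q : Finset α) : Prop :=
  ∀ H ∈ T, ∀ H' ∈ T, ¬ H ⊆ Q → ¬ H' ⊆ Q → Disjoint (H \ Q) (H' \ Q) → Disjoint H H'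

theorem IsSpecialFor.mono {T T' : Finset (Finset α)} {Q : Finset α} (h : IsSpecialFor T Q)
    (hT' : T' ⊆ T) : IsSpecialFor T' Q :=
  fun H hH H' hH' => h H (hT' hH) H' (hT' hH')

namespace IsGraftedOver

variable {P T : Finset (Finset α)} {Q : Finset α}

theorem disjoint (h : IsGraftedOver P T) {Q' : Finset α} (hQ : Q ∈ P) (hQ' : Q' ∈ P)
    (hne : Q ≠ Q') : Disjoint Q Q' :=
  h.pairwiseDisjoint hQ hQ' hne

theorem exists_mem_of_not_disjoint (h : IsGraftedOver P T) (hQ : Q ∈ P) {H H' : Finset α}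
    (hH : H ∈ T) (hH' : H' ∈ T) (hQH : ¬ Disjoint Q H) (hQH' : ¬ Disjoint Q H') :
    ∃ v ∈ Q, v ∈ H ∧ v ∈ H' := by
  obtain ⟨v, hvQ, hvH⟩ := Finset.not_disjoint_iff.1 hQH
  obtain ⟨w, hwQ, hwH'⟩ := Finset.not_disjoint_iff.1 hQH'
  obtain hsub | hsub := h.inter_subset_or Q hQ H hH H' hH'
  · exact ⟨v, hvQ, hvH, hsub (Finset.mem_inter.2 ⟨hvQ, hvH⟩)⟩
  · exact ⟨w, hwQ, hsub (Finset.mem_inter.2 ⟨hwQ, hwH'⟩), hwH'⟩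

theorem not_disjoint (h : IsGraftedOver P T) (hQ : Q ∈ P) {H H' : Finset α}
    (hH : H ∈ T) (hH' : H' ∈ T) (hQH : ¬ Disjoint Q H) (hQH' : ¬ Disjoint Q H') :
    ¬ Disjoint H H' :=
  let ⟨v, _, hv⟩ := h.exists_mem_of_not_disjoint hQ hH hH' hQH hQH'
  Finset.not_disjoint_iff.2 ⟨v, hv⟩

theorem card_le_of_isMatchingOf (h : IsGraftedOver P T) {M : Finset (Finset α)}
    (hM : IsMatchingOf T M) : M.card ≤ P.card := by
  have exists_part : ∀ H ∈ M, ∃ Q ∈ P, ¬ Disjoint Q H := by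
    intro H hH
    obtain ⟨v, hv⟩ := h.nonempty H (hM.1 hH)
    obtain ⟨Q, hQ, hvQ⟩ := h.exists_mem H (hM.1 hH) v hv
    exact ⟨Q, hQ, Finset.not_disjoint_iff.2 ⟨v, hvQ, hv⟩⟩
  choose! part hpart hmeet using exists_part
  refine Finset.card_le_card_of_injOn part hpart fun H hH H' hH' heq => ?_
  by_contra hne
  exact h.not_disjoint (hpart H hH) (hM.1 hH) (hM.1 hH') (hmeet H hH) (heq ▸ hmeet H' hH')
    (Finset.disjoint_iff_inter_eq_empty.2 (hM.2 H hH H' hH' hne))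

theorem hasLeafProp_image_supports (h : IsGraftedOver P T) :
    HasLeafProp (T.image fun H => P.filter fun Q => ¬ Disjoint Q H) := by
  refine h.hasLeafProp.image _ fun F hF H hH G _ hsub Q hQ => ?_
  obtain ⟨hQF, hQH⟩ := Finset.mem_inter.1 hQ
  obtain ⟨hQP, hmF⟩ := Finset.mem_filter.1 hQF
  obtain ⟨v, hvQ, hvF, hvH⟩ :=
    h.exists_mem_of_not_disjoint hQP hF hH hmF (Finset.mem_filter.1 hQH).2
  have hvG : v ∈ G := (Finset.mem_inter.1 (hsub (Finset.mem_inter.2 ⟨hvF, hvH⟩))).2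
  exact Finset.mem_inter.2
    ⟨hQF, Finset.mem_filter.2 ⟨hQP, Finset.not_disjoint_iff.2 ⟨v, hvQ, hvG⟩⟩⟩

theorem exists_part_supports_chain (h : IsGraftedOver P T) (hP : P.Nonempty) :
    ∃ Q ∈ P, ∀ H ∈ T, ∀ H' ∈ T, ¬ Disjoint Q H → ¬ Disjoint Q H' →
      (∀ Q' ∈ P, ¬ Disjoint Q' H → ¬ Disjoint Q' H') ∨
        ∀ Q' ∈ P, ¬ Disjoint Q' H' → ¬ Disjoint Q' H := by
  obtain ⟨Q, hQ, hnest⟩ := h.hasLeafProp_image_supports.exists_isNestPoint hP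
  have of_subset : ∀ {H H'}, P.filter (¬ Disjoint · H) ∩ P ⊆ P.filter (¬ Disjoint · H') →
      ∀ Q' ∈ P, ¬ Disjoint Q' H → ¬ Disjoint Q' H' := fun hsub Q' hQ' hmeet =>
    (Finset.mem_filter.1 (hsub (Finset.mem_inter.2
      ⟨Finset.mem_filter.2 ⟨hQ', hmeet⟩, hQ'⟩))).2
  exact ⟨Q, hQ, fun H hH H' hH' hQH hQH' =>
    (hnest _ (Finset.mem_image_of_mem _ hH) _ (Finset.mem_image_of_mem _ hH')
      (Finset.mem_filter.2 ⟨hQ, hQH⟩) (Finset.mem_filter.2 ⟨hQ, hQH'⟩)).imp of_subset of_subset⟩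

theorem not_disjoint_sdiff (h : IsGraftedOver P T) (hQ : Q ∈ P) {H H' : Finset α} (hH : H ∈ T)
    (hH' : H' ∈ T) (hHQ : ¬ H ⊆ Q) (hsub : ∀ Q' ∈ P, ¬ Disjoint Q' H → ¬ Disjoint Q' H') :
    ¬ Disjoint (H \ Q) (H' \ Q) := by
  obtain ⟨v, hvH, hvQ⟩ := Finset.not_subset.1 hHQ
  obtain ⟨Q', hQ', hvQ'⟩ := h.exists_mem H hH v hvH
  have hmeet : ¬ Disjoint Q' H := Finset.not_disjoint_iff.2 ⟨v, hvQ', hvH⟩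
  obtain ⟨w, hwQ', hwH, hwH'⟩ :=
    h.exists_mem_of_not_disjoint hQ' hH hH' hmeet (hsub Q' hQ' hmeet)
  have hwQ : w ∉ Q :=
    Finset.disjoint_left.1 (h.disjoint hQ' hQ fun heq => hvQ (heq ▸ hvQ')) hwQ'
  exact Finset.not_disjoint_iff.2
    ⟨w, Finset.mem_sdiff.2 ⟨hwH, hwQ⟩, Finset.mem_sdiff.2 ⟨hwH', hwQ⟩⟩

theorem exists_isSpecialFor (h : IsGraftedOver P T) (hP : P.Nonempty) :
    ∃ Q ∈ P, IsSpecialFor T Q := by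
  obtain ⟨Q, hQ, hchain⟩ := h.exists_part_supports_chain hP
  refine ⟨Q, hQ, fun H hH H' hH' hHQ hHQ' hdisj => Finset.disjoint_left.2 fun v hv hv' => ?_⟩
  by_cases hvQ : v ∈ Q
  · obtain hsub | hsub := hchain H hH H' hH' (Finset.not_disjoint_iff.2 ⟨v, hvQ, hv⟩)
      (Finset.not_disjoint_iff.2 ⟨v, hvQ, hv'⟩)
    · exact h.not_disjoint_sdiff hQ hH hH' hHQ hsub hdisj
    · exact h.not_disjoint_sdiff hQ hH' hH hHQ' hsub hdisj.symm
  · exact Finset.disjoint_left.1 hdisj (Finset.mem_sdiff.2 ⟨hv, hvQ⟩)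
      (Finset.mem_sdiff.2 ⟨hv', hvQ⟩)

theorem contract (h : IsGraftedOver P T) (hQ : Q ∈ P) {T' : Finset (Finset α)} (hT' : T' ⊆ T)
    (hnot : ∀ H ∈ T', ¬ H ⊆ Q) (hmem : ∀ H ∈ T, Disjoint Q H → H ∈ T') :
    IsGraftedOver (P.erase Q) (T'.image (· \ Q)) := by
  refine ⟨h.pairwiseDisjoint.subset (Finset.coe_subset.2 (Finset.erase_subset _ _)),
    fun Q' hQ' => ?_, ?_, ?_, ?_, ?_⟩
  · obtain ⟨hne, hQ'⟩ := Finset.mem_erase.1 hQ'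
    obtain ⟨H, hH, hHQ'⟩ := h.exists_subset Q' hQ'
    have hQH : Disjoint Q H := (h.disjoint hQ hQ' hne.symm).mono_right hHQ'
    exact ⟨H \ Q, Finset.mem_image_of_mem _ (hmem H hH hQH), Finset.sdiff_subset.trans hHQ'⟩
  · simp only [Finset.forall_mem_image, Finset.mem_sdiff, Finset.mem_erase]
    rintro H hH v ⟨hvH, hvQ⟩
    obtain ⟨Q', hQ', hvQ'⟩ := h.exists_mem H (hT' hH) v hvH
    exact ⟨Q', ⟨fun heq => hvQ (heq ▸ hvQ'), hQ'⟩, hvQ'⟩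
  · simp only [Finset.forall_mem_image]
    intro Q' hQ' H hH H' hH'
    have := h.inter_subset_or Q' (Finset.mem_of_mem_erase hQ') H (hT' hH) H' (hT' hH')
    grind
  · simp only [Finset.forall_mem_image, Finset.sdiff_nonempty]
    exact hnot
  · refine (h.hasLeafProp.mono hT').image _ fun F _ H _ G _ hsub v hv => ?_
    simp only [Finset.mem_inter, Finset.mem_sdiff] at hv ⊢
    have hvG := Finset.mem_inter.1 (hsub (Finset.mem_inter.2 ⟨hv.1.1, hv.2.1⟩))
    exact ⟨hv.1, hvG.2, hv.1.2⟩

theorem delete (h : IsGraftedOver P T) (hQ : Q ∈ P) :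
    IsGraftedOver (P.erase Q) (T.filter (Disjoint Q ·)) := by
  have himage : (T.filter (Disjoint Q ·)).image (· \ Q) = T.filter (Disjoint Q ·) := by
    refine (Finset.image_congr fun H hH => ?_).trans Finset.image_id
    exact Finset.sdiff_eq_self_of_disjoint (Finset.mem_filter.1 hH).2.symm
  rw [← himage]
  refine h.contract hQ (Finset.filter_subset _ _) (fun H hH hHQ => ?_)
    fun H hH hQH => Finset.mem_filter.2 ⟨hH, hQH⟩
  obtain ⟨hHT, hQH⟩ := Finset.mem_filter.1 hH
  exact (h.nonempty H hHT).ne_empty (Finset.disjoint_self_iff_empty _ |>.1 (hQH.mono_left hHQ))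

end IsGraftedOver

end GraftedForests

section MatchingUpperSet

variable {α β : Type} [DecidableEq α] [DecidableEq β]

theorem IsMatchingOf.disjoint {T M : Finset (Finset α)} (hM : IsMatchingOf T M) {H H' : Finset α}
    (hH : H ∈ M) (hH' : H' ∈ M) (hne : H ≠ H') : Disjoint H H' :=
  Finset.disjoint_iff_inter_eq_empty.2 (hM.2 H hH H' hH' hne)

theorem IsMatchingOf.of_subset {T M T' M' : Finset (Finset α)} (hM : IsMatchingOf T M)
    (hMM' : M' ⊆ M) (hT' : M' ⊆ T') : IsMatchingOf T' M' :=
  ⟨hT', fun F hF G hG => hM.2 F (hMM' hF) G (hMM' hG)⟩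

/-- The sets of vertices containing a matching of size `k` of `T`, that is, the supports of the
monomials in the `k`-th square-free power of the facet ideal. -/
def matchingUpperSet (T : Finset (Finset α)) (k : ℕ) : Set (Finset α) :=
  {S | ∃ M, IsMatchingOf T M ∧ M.card = k ∧ ∀ H ∈ M, H ⊆ S}

theorem isUpperSet_matchingUpperSet (T : Finset (Finset α)) (k : ℕ) :
    IsUpperSet (matchingUpperSet T k) :=
  fun _ _ hSS' ⟨M, hM, hcard, hsub⟩ => ⟨M, hM, hcard, fun H hH => (hsub H hH).trans hSS'⟩

theorem matchingUpperSet_zero (T : Finset (Finset α)) : matchingUpperSet T 0 = Set.univ :=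
  Set.eq_univ_of_forall fun _ => ⟨∅, ⟨Finset.empty_subset _, by simp⟩, rfl, by simp⟩

theorem mem_matchingUpperSet_of_le_card {T M : Finset (Finset α)} (hM : IsMatchingOf T M) {k : ℕ}
    (hk : k ≤ M.card) {S : Finset α} (hS : ∀ H ∈ M, H ⊆ S) : S ∈ matchingUpperSet T k := by
  obtain ⟨M', hM', hcard⟩ := Finset.exists_subset_card_eq hk
  exact ⟨M', hM.of_subset hM' (hM'.trans hM.1), hcard, fun H hH => hS H (hM' hH)⟩

theorem mem_matchingUpperSet_filter_iff {T : Finset (Finset α)} {p : Finset α → Prop}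
    [DecidablePred p] {S : Finset α} (hS : ∀ H ∈ T, H ⊆ S → p H) {k : ℕ} :
    S ∈ matchingUpperSet (T.filter p) k ↔ S ∈ matchingUpperSet T k := by
  constructor <;> rintro ⟨M, hM, hcard, hsub⟩
  · exact ⟨M, hM.of_subset subset_rfl (hM.1.trans (Finset.filter_subset _ _)), hcard, hsub⟩
  · exact ⟨M, hM.of_subset subset_rfl fun H hH => Finset.mem_filter.2
      ⟨hM.1 hH, hS H (hM.1 hH) (hsub H hH)⟩, hcard, hsub⟩

theorem mem_matchingUpperSet_succ {T : Finset (Finset α)} {F : Finset α} (hF : F ∈ T)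
    (hne : F.Nonempty) {k : ℕ} {S : Finset α} (hFS : F ⊆ S) (hS : S \ F ∈ matchingUpperSet T k) :
    S ∈ matchingUpperSet T (k + 1) := by
  obtain ⟨M, hM, rfl, hsub⟩ := hS
  have hdisj : ∀ H ∈ M, F ∩ H = ∅ := fun H hH =>
    Finset.disjoint_iff_inter_eq_empty.1 (Finset.disjoint_sdiff.mono_right (hsub H hH))
  have hFM : F ∉ M := fun hFM => hne.ne_empty (Finset.inter_self F ▸ hdisj F hFM)
  refine ⟨insert F M, ⟨Finset.insert_subset hF hM.1, ?_⟩, Finset.card_insert_of_notMem hFM, ?_⟩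
  · simp only [Finset.forall_mem_insert]
    exact ⟨⟨fun h => absurd rfl h, fun H hH _ => hdisj H hH⟩,
      fun H hH => ⟨fun _ => Finset.inter_comm F H ▸ hdisj H hH, hM.2 H hH⟩⟩
  · exact Finset.forall_mem_insert .. |>.2
      ⟨hFS, fun H hH => (hsub H hH).trans Finset.sdiff_subset⟩

theorem mem_matchingUpperSet_image_iff {T : Finset (Finset α)} {f : Finset α → Finset β}
    (hf : ∀ H ∈ T, (f H).Nonempty)
    (hdisj : ∀ H ∈ T, ∀ H' ∈ T, Disjoint (f H) (f H') ↔ Disjoint H H') {k : ℕ} {S : Finset β}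
    {S' : Finset α} (hS : ∀ H ∈ T, f H ⊆ S ↔ H ⊆ S') :
    S ∈ matchingUpperSet (T.image f) k ↔ S' ∈ matchingUpperSet T k := by
  constructor
  · rintro ⟨M, hM, rfl, hsub⟩
    obtain ⟨N, hNT, hinj, rfl⟩ := Finset.exists_subset_injOn_image_eq_of_surjOn (f := f)
      (T : Set (Finset α)) M (by simpa [Set.SurjOn] using Finset.coe_subset.2 hM.1)
    have hNT : N ⊆ T := hNT
    refine ⟨N, ⟨hNT, fun H hH H' hH' hne => ?_⟩, (Finset.card_image_of_injOn hinj).symm,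
      fun H hH => (hS H (hNT hH)).1 (hsub _ (Finset.mem_image_of_mem f hH))⟩
    have hne' : f H ≠ f H' := fun heq => hne (hinj hH hH' heq)
    exact Finset.disjoint_iff_inter_eq_empty.1 <| (hdisj H (hNT hH) H' (hNT hH')).1 <|
      hM.disjoint (Finset.mem_image_of_mem f hH) (Finset.mem_image_of_mem f hH') hne'
  · rintro ⟨M, hM, rfl, hsub⟩
    have hdisj' : ∀ H ∈ M, ∀ H' ∈ M, H ≠ H' → Disjoint (f H) (f H') := fun H hH H' hH' hne =>
      (hdisj H (hM.1 hH) H' (hM.1 hH')).2 (hM.disjoint hH hH' hne)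
    have hinj : Set.InjOn f M := by
      intro H hH H' hH' heq
      by_contra hne
      exact (hf H (hM.1 hH)).ne_empty
        (Finset.disjoint_self_iff_empty _ |>.1 (heq ▸ hdisj' H hH H' hH' hne))
    refine ⟨M.image f, ⟨Finset.image_subset_image hM.1, ?_⟩, Finset.card_image_of_injOn hinj, ?_⟩
    · simp only [Finset.forall_mem_image]
      exact fun H hH H' hH' hne => Finset.disjoint_iff_inter_eq_empty.1
        (hdisj' H hH H' hH' fun heq => hne (heq ▸ rfl))
    · simp only [Finset.forall_mem_image]
      exact fun H hH => (hS H (hM.1 hH)).2 (hsub H hH)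

theorem exists_mem_matchingUpperSet_card_lt {T : Finset (Finset α)} (hT : ∀ H ∈ T, H.Nonempty)
    {k : ℕ} {S : Finset α} (hS : S ∈ matchingUpperSet T (k + 1)) :
    ∃ S' ∈ matchingUpperSet T k, S'.card < S.card := by
  obtain ⟨M, hM, hcard, hsub⟩ := hS
  obtain ⟨F, hF⟩ : M.Nonempty := Finset.card_pos.1 (hcard ▸ k.succ_pos)
  refine ⟨S \ F, ⟨M.erase F, hM.of_subset (Finset.erase_subset _ _)
    ((Finset.erase_subset _ _).trans hM.1), ?_, fun H hH => ?_⟩, ?_⟩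
  · rw [Finset.card_erase_of_mem hF, hcard, Nat.add_sub_cancel]
  · obtain ⟨hne, hH⟩ := Finset.mem_erase.1 hH
    exact Finset.subset_sdiff.2 ⟨hsub H hH, hM.disjoint hH hF hne⟩
  · exact Finset.card_lt_card (Finset.sdiff_ssubset (hsub F hF) (hT F (hM.1 hF)))

end MatchingUpperSet

section PrimeFiltration

variable {α : Type}

/-- The sets of vertices meeting `C`, that is, the supports of the monomials in the prime ideal
generated by the variables in `C`. -/
def meetingUpperSet (C : Finset α) : Set (Finset α) :=
  {S | ¬ Disjoint C S}

theorem isUpperSet_meetingUpperSet (C : Finset α) : IsUpperSet (meetingUpperSet C) :=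
  fun _ _ hSS' hS hCS' => hS (hCS'.mono_right hSS')

variable [DecidableEq α]

/-- A prime filtration, all of whose factors are `R ⧸ ⟨x_v : v ∈ C⟩` with `#C = c`, of the
quotient of `R` by the square-free monomial ideal `I` whose monomials have their supports in `U`.
In `split`, the sets `{S | S ∪ A ∈ U}` and `U ∪ Set.Ici A` correspond to the ideals `I : x_A` and
`I + ⟨x_A⟩`. -/
inductive HasPrimeFiltration : ℕ → Set (Finset α) → Prop
  | top (c : ℕ) : HasPrimeFiltration c Set.univ
  | prime (C : Finset α) : HasPrimeFiltration C.card (meetingUpperSet C)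
  | split {c : ℕ} {U : Set (Finset α)} (A : Finset α) (hU : IsUpperSet U)
      (colon : HasPrimeFiltration c {S | S ∪ A ∈ U})
      (sup : HasPrimeFiltration c (U ∪ Set.Ici A)) : HasPrimeFiltration c U

theorem HasPrimeFiltration.meetingUpperSet_union_Ici (D C : Finset α)
    (hDC : Disjoint D C) : HasPrimeFiltration (C.card + 1) (meetingUpperSet C ∪ Set.Ici D) := by
  induction D using Finset.induction_on generalizing C with
  | empty =>
    rw [show Set.Ici (∅ : Finset α) = Set.univ from Set.Ici_bot, Set.union_univ]
    exact .top _
  | insert v D hvD ih =>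
    obtain ⟨hvC, hDC⟩ := Finset.disjoint_insert_left.1 hDC
    refine .split {v} ((isUpperSet_meetingUpperSet C).union (isUpperSet_Ici _)) ?_ ?_
    · convert ih C hDC using 1
      ext S
      change ¬ Disjoint C (S ∪ {v}) ∨ insert v D ⊆ S ∪ {v} ↔ ¬ Disjoint C S ∨ D ⊆ S
      rw [Finset.disjoint_union_right, Finset.disjoint_singleton_right,
        Finset.insert_subset_iff, Finset.union_singleton, Finset.subset_insert_iff_of_notMem hvD]
      simp [hvC]
    · convert prime (insert v C) using 1
      · exact (Finset.card_insert_of_notMem hvC).symm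
      · ext S
        change (¬ Disjoint C S ∨ insert v D ⊆ S) ∨ {v} ⊆ S ↔ ¬ Disjoint (insert v C) S
        rw [Finset.insert_subset_iff, Finset.singleton_subset_iff, Finset.disjoint_insert_left]
        tauto

theorem matchingUpperSet_union_Ici (T : Finset (Finset α)) (F : Finset α) (k : ℕ) :
    matchingUpperSet T k ∪ Set.Ici F =
      matchingUpperSet (T.filter (¬ F ⊆ ·)) k ∪ Set.Ici F := by
  ext S
  refine or_congr_left' fun hFS => (mem_matchingUpperSet_filter_iff fun H _ hHS hFH => ?_).symm
  exact hFS (hFH.trans hHS)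

theorem IsSpecialFor.union_mem_matchingUpperSet_iff {T : Finset (Finset α)} {Q : Finset α}
    (hQ : IsSpecialFor T Q) (hTQ : ∀ H ∈ T, ¬ H ⊆ Q) {A : Finset α} (hAQ : A ⊆ Q)
    (hA : ∀ H ∈ T, Q ∩ H ⊆ A) {S : Finset α} {k : ℕ} :
    S ∪ A ∈ matchingUpperSet T k ↔ S ∈ matchingUpperSet (T.image (· \ Q)) k := by
  refine (mem_matchingUpperSet_image_iff (fun H hH => Finset.sdiff_nonempty.2 (hTQ H hH))
    (fun H hH H' hH' => ⟨hQ H hH H' hH' (hTQ H hH) (hTQ H' hH'), fun hdisj =>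
      hdisj.mono Finset.sdiff_subset Finset.sdiff_subset⟩) fun H hH => ?_).symm
  have := hA H hH
  grind

theorem IsSpecialFor.setOf_union_erase_mem {T : Finset (Finset α)} {Q : Finset α}
    (hQ : IsSpecialFor T Q) (hTQ : ∀ H ∈ T, ¬ H ⊆ Q) {A Z : Finset α} (hAQ : A ⊆ Q)
    (hZ : Disjoint Z Q) {v : α} (hv : v ∈ A) (htrace : ∀ H ∈ T, v ∉ H → Q ∩ H ⊆ A.erase v)
    (k : ℕ) :
    {S | S ∪ A.erase v ∈ meetingUpperSet Z ∪ matchingUpperSet T k ∪ Set.Ici A} =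
      meetingUpperSet (insert v Z) ∪ matchingUpperSet ((T.filter (v ∉ ·)).image (· \ Q)) k := by
  ext S
  have hAvQ : A.erase v ⊆ Q := (Finset.erase_subset v A).trans hAQ
  have hmeet : ¬ Disjoint Z (S ∪ A.erase v) ↔ ¬ Disjoint Z S := by
    simp only [Finset.disjoint_union_right, hZ.mono_right hAvQ, and_true]
  have hIci : A ⊆ S ∪ A.erase v ↔ v ∈ S := by
    rw [← Finset.insert_erase hv, Finset.insert_subset_iff]
    simp
  have hmat : v ∉ S → (S ∪ A.erase v ∈ matchingUpperSet T k ↔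
      S ∈ matchingUpperSet ((T.filter (v ∉ ·)).image (· \ Q)) k) := by
    intro hvS
    have hvT : ∀ H ∈ T, H ⊆ S ∪ A.erase v → v ∉ H := fun H _ hHS hvH => by
      simpa [hvS] using hHS hvH
    rw [← mem_matchingUpperSet_filter_iff hvT]
    refine (hQ.mono (Finset.filter_subset _ _)).union_mem_matchingUpperSet_iff
      (fun H hH => hTQ H (Finset.mem_filter.1 hH).1) hAvQ fun H hH => ?_
    exact htrace H (Finset.mem_filter.1 hH).1 (Finset.mem_filter.1 hH).2
  change (¬ Disjoint Z (S ∪ A.erase v) ∨ _) ∨ A ⊆ S ∪ A.erase v ↔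
    ¬ Disjoint (insert v Z) S ∨ _
  rw [hmeet, hIci, Finset.disjoint_insert_left]
  tauto

namespace IsGraftedOver

variable {P T : Finset (Finset α)} {Q : Finset α}

theorem card_filter_not_disjoint_le_one (h : IsGraftedOver P T) (hQ : Q ∈ P)
    {M : Finset (Finset α)} (hM : IsMatchingOf T M) :
    (M.filter (¬ Disjoint Q ·)).card ≤ 1 := by
  refine Finset.card_le_one.2 fun H hH H' hH' => ?_
  obtain ⟨hHM, hQH⟩ := Finset.mem_filter.1 hH
  obtain ⟨hHM', hQH'⟩ := Finset.mem_filter.1 hH'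
  by_contra hne
  exact h.not_disjoint hQ (hM.1 hHM) (hM.1 hHM') hQH hQH' (hM.disjoint hHM hHM' hne)

theorem union_mem_matchingUpperSet_succ_iff (h : IsGraftedOver P T) (hQ : Q ∈ P) {F : Finset α}
    (hF : F ∈ T) (hFQ : F ⊆ Q) {S : Finset α} {k : ℕ} :
    S ∪ F ∈ matchingUpperSet T (k + 1) ↔ S ∈ matchingUpperSet (T.filter (Disjoint Q ·)) k := by
  constructor
  · rintro ⟨M, hM, hcard, hsub⟩
    have hle : k ≤ (M.filter (Disjoint Q ·)).card := by
      have := Finset.card_filter_add_card_filter_not (s := M) (Disjoint Q ·)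
      have := h.card_filter_not_disjoint_le_one hQ hM
      lia
    refine mem_matchingUpperSet_of_le_card
      (hM.of_subset (Finset.filter_subset _ _) (Finset.filter_subset_filter _ hM.1)) hle
      fun H hH => ?_
    obtain ⟨hHM, hQH⟩ := Finset.mem_filter.1 hH
    exact (hQH.symm.mono_right hFQ).left_le_of_le_sup_right (hsub H hHM)
  · rintro ⟨M, hM, hcard, hsub⟩
    refine mem_matchingUpperSet_succ hF (h.nonempty F hF) Finset.subset_union_right
      ⟨M, hM.of_subset subset_rfl (hM.1.trans (Finset.filter_subset _ _)), hcard, fun H hH => ?_⟩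
    exact Finset.subset_sdiff.2 ⟨(hsub H hH).trans Finset.subset_union_left,
      ((Finset.mem_filter.1 (hM.1 hH)).2.mono_left hFQ).symm⟩

theorem exists_mem_forall_subset (h : IsGraftedOver P T) (hQ : Q ∈ P) {A : Finset α} (hAQ : A ⊆ Q)
    (hA : A.Nonempty) : ∃ v ∈ A, ∀ H ∈ T, v ∈ H → A ⊆ H := by
  obtain ⟨v, hvA, hv⟩ := A.exists_min_image (fun v => (T.filter (v ∈ ·)).card) hA
  refine ⟨v, hvA, fun H hH hvH w hwA => ?_⟩
  by_contra hwH
  have hlt : T.filter (w ∈ ·) ⊂ T.filter (v ∈ ·) := by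
    refine Finset.ssubset_iff_of_subset (fun H' hH' => ?_) |>.2
      ⟨H, Finset.mem_filter.2 ⟨hH, hvH⟩, fun hmem => hwH (Finset.mem_filter.1 hmem).2⟩
    obtain ⟨hHT', hwH'⟩ := Finset.mem_filter.1 hH'
    refine Finset.mem_filter.2 ⟨hHT', ?_⟩
    obtain hsub | hsub := h.inter_subset_or Q hQ H hH H' hHT'
    · exact hsub (Finset.mem_inter.2 ⟨hAQ hvA, hvH⟩)
    · exact absurd (hsub (Finset.mem_inter.2 ⟨hAQ hwA, hwH'⟩)) hwH
  exact (hv w hwA).not_gt (Finset.card_lt_card hlt)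

theorem hasPrimeFiltration_union_Ici (h : IsGraftedOver P T) (hQ : Q ∈ P)
    (hspecial : IsSpecialFor T Q) {T₀ : Finset (Finset α)} (hT₀ : T₀ ⊆ T)
    (hmem : ∀ H ∈ T, Disjoint Q H → H ∈ T₀) (hnot : ∀ H ∈ T₀, ¬ H ⊆ Q) {Z : Finset α}
    (hZ : Disjoint Z Q) {c k : ℕ}
    (hcontract : ∀ T', IsGraftedOver (P.erase Q) T' → ∀ v ∈ Q,
      HasPrimeFiltration c (meetingUpperSet (insert v Z) ∪ matchingUpperSet T' k))
    {A : Finset α} (hAQ : A ⊆ Q) (hA : ∀ H ∈ T₀, Q ∩ H ⊆ A ∨ A ⊆ H) :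
    HasPrimeFiltration c (meetingUpperSet Z ∪ matchingUpperSet T₀ k ∪ Set.Ici A) := by
  induction A using Finset.strongInduction with
  | H A ih =>
  obtain rfl | hne := A.eq_empty_or_nonempty
  · rw [← Finset.bot_eq_empty, Set.Ici_bot, Set.union_univ]
    exact .top c
  obtain ⟨v, hvA, hv⟩ := h.exists_mem_forall_subset hQ hAQ hne
  have trace_subset : ∀ H ∈ T₀, v ∉ H → Q ∩ H ⊆ A.erase v := fun H hH hvH =>
    Finset.subset_erase.2 ⟨(hA H hH).resolve_right fun hAH => hvH (hAH hvA),
      fun hmem => hvH (Finset.mem_inter.1 hmem).2⟩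
  refine .split (A.erase v) (((isUpperSet_meetingUpperSet Z).union
    (isUpperSet_matchingUpperSet T₀ k)).union (isUpperSet_Ici A)) ?_ ?_
  · rw [(hspecial.mono hT₀).setOf_union_erase_mem hnot hAQ hZ hvA trace_subset]
    refine hcontract _ (h.contract hQ ((Finset.filter_subset _ _).trans hT₀)
      (fun H hH => hnot H (Finset.mem_filter.1 hH).1) fun H hH hQH => ?_) v (hAQ hvA)
    exact Finset.mem_filter.2
      ⟨hmem H hH hQH, Finset.disjoint_left.1 hQH (hAQ hvA)⟩
  · have hIci : Set.Ici A ∪ Set.Ici (A.erase v) = Set.Ici (A.erase v) :=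
      Set.union_eq_right.2 (Set.Ici_subset_Ici.2 (Finset.erase_subset _ _))
    rw [Set.union_assoc, hIci]
    refine ih _ (Finset.erase_ssubset hvA) ((Finset.erase_subset _ _).trans hAQ) fun H hH => ?_
    by_cases hvH : v ∈ H
    · exact .inr ((Finset.erase_subset _ _).trans (hv H (hT₀ hH) hvH))
    · exact .inl (trace_subset H hH hvH)

theorem matchingUpperSet_eq_empty (h : IsGraftedOver P T) {k : ℕ} (hk : P.card < k) :
    matchingUpperSet T k = ∅ :=
  Set.eq_empty_of_forall_notMem fun _ ⟨_, hM, hcard, _⟩ =>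
    (hcard ▸ hk).not_ge (h.card_le_of_isMatchingOf hM)

theorem exists_minimal_subset (h : IsGraftedOver P T) (hQ : Q ∈ P) :
    ∃ F ∈ T, F ⊆ Q ∧ ∀ H ∈ T, H ⊆ Q → F ⊆ H := by
  obtain ⟨H, hH, hHQ⟩ := h.exists_subset Q hQ
  obtain ⟨F, hF, hmin⟩ := (T.filter (· ⊆ Q)).exists_min_image Finset.card
    ⟨H, Finset.mem_filter.2 ⟨hH, hHQ⟩⟩
  obtain ⟨hFT, hFQ⟩ := Finset.mem_filter.1 hF
  refine ⟨F, hFT, hFQ, fun H hH hHQ => ?_⟩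
  obtain hsub | hsub := h.inter_subset_or Q hQ F hFT H hH
  · rwa [Finset.inter_eq_right.2 hFQ] at hsub
  · rw [Finset.inter_eq_right.2 hHQ] at hsub
    exact (Finset.eq_of_subset_of_card_le hsub
      (hmin H (Finset.mem_filter.2 ⟨hH, hHQ⟩))).symm.subset

theorem setOf_union_mem_eq (h : IsGraftedOver P T) (hQ : Q ∈ P) {F : Finset α} (hF : F ∈ T)
    (hFQ : F ⊆ Q) {Z : Finset α} (hZ : Disjoint Z Q) (k : ℕ) :
    {S | S ∪ F ∈ meetingUpperSet Z ∪ matchingUpperSet T (k + 1)} =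
      meetingUpperSet Z ∪ matchingUpperSet (T.filter (Disjoint Q ·)) k := by
  ext S
  refine or_congr (not_congr ?_) (h.union_mem_matchingUpperSet_succ_iff hQ hF hFQ)
  rw [Finset.disjoint_union_right, and_iff_left (hZ.mono_right hFQ)]

theorem hasPrimeFiltration (h : IsGraftedOver P T) {Z : Finset α} (hZ : ∀ Q ∈ P, Disjoint Z Q)
    {c k : ℕ} (hk : k ≤ P.card + 1) (hc : c + k = P.card + 1 + Z.card) :
    HasPrimeFiltration c (meetingUpperSet Z ∪ matchingUpperSet T k) := by
  induction P using Finset.strongInduction generalizing T Z k with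
  | H P ih =>
  obtain _ | k := k
  · rw [matchingUpperSet_zero, Set.union_univ]
    exact .top c
  obtain heq | hlt := hk.eq_or_lt
  · rw [h.matchingUpperSet_eq_empty (by lia), Set.union_empty]
    obtain rfl : c = Z.card := by lia
    exact .prime Z
  obtain ⟨Q, hQ, hspecial⟩ := h.exists_isSpecialFor (Finset.card_pos.1 (by lia))
  obtain ⟨F, hF, hFQ, hmin⟩ := h.exists_minimal_subset hQ
  have hcard : (P.erase Q).card + 1 = P.card := Finset.card_erase_add_one hQ
  have hZ' : ∀ Q' ∈ P.erase Q, Disjoint Z Q' := fun Q' hQ' => hZ Q' (Finset.mem_of_mem_erase hQ')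
  refine .split F ((isUpperSet_meetingUpperSet Z).union (isUpperSet_matchingUpperSet T _)) ?_ ?_
  · rw [h.setOf_union_mem_eq hQ hF hFQ (hZ Q hQ)]
    exact ih _ (Finset.erase_ssubset hQ) (h.delete hQ) hZ' (by lia) (by lia)
  · rw [Set.union_assoc, matchingUpperSet_union_Ici, ← Set.union_assoc]
    refine h.hasPrimeFiltration_union_Ici hQ hspecial (Finset.filter_subset _ _)
      (fun H hH hQH => ?_) (fun H hH hHQ => ?_) (hZ Q hQ) (fun T' hT' v hv => ?_) hFQ
      fun H hH => ?_
    · exact Finset.mem_filter.2 ⟨hH, fun hFH => (h.nonempty F hF).ne_empty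
        (Finset.disjoint_self_iff_empty _ |>.1 (hQH.mono hFQ hFH))⟩
    · exact (Finset.mem_filter.1 hH).2 (hmin H (Finset.mem_filter.1 hH).1 hHQ)
    · have hvZ : v ∉ Z := Finset.disjoint_right.1 (hZ Q hQ) hv
      refine ih _ (Finset.erase_ssubset hQ) hT' (fun Q' hQ' => ?_) (by lia) ?_
      · obtain ⟨hne, hQ'P⟩ := Finset.mem_erase.1 hQ'
        exact Finset.disjoint_insert_left.2
          ⟨Finset.disjoint_left.1 (h.disjoint hQ hQ'P hne.symm) hv, hZ' Q' hQ'⟩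
      · rw [Finset.card_insert_of_notMem hvZ]
        lia
    · obtain ⟨hHT, hFH⟩ := Finset.mem_filter.1 hH
      refine .inl ((h.inter_subset_or Q hQ H hHT F hF).resolve_right fun hsub => hFH ?_)
      rwa [Finset.inter_eq_right.2 hFQ] at hsub

end IsGraftedOver

end PrimeFiltration

section SquareFreeIdeals

variable {α : Type} (K : Type) [Field K]

theorem xMon_eq_monomial (A : Finset α) :
    xMon K A = monomial (∑ v ∈ A, Finsupp.single v 1) 1 :=
  (monomial_sum_one A _).symm

theorem xMon_dvd_xMon {A B : Finset α} (h : A ⊆ B) : xMon K A ∣ xMon K B :=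
  Finset.prod_dvd_prod_of_subset A B _ h

theorem sum_single_le_iff {A : Finset α} {m : α →₀ ℕ} :
    ∑ v ∈ A, Finsupp.single v 1 ≤ m ↔ A ⊆ m.support := by
  classical
  refine ⟨fun h v hv => ?_, fun h v => ?_⟩
  · have := h v
    simp only [Finsupp.coe_finsetSum, Finset.sum_apply, Finsupp.single_apply,
      Finset.sum_ite_eq', if_pos hv] at this
    exact Finsupp.mem_support_iff.2 (by lia)
  · simp only [Finsupp.coe_finsetSum, Finset.sum_apply, Finsupp.single_apply,
      Finset.sum_ite_eq']
    split_ifs with hv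
    · exact Nat.one_le_iff_ne_zero.2 (Finsupp.mem_support_iff.1 (h hv))
    · exact Nat.zero_le _

theorem support_sum_single (A : Finset α) :
    (∑ v ∈ A, Finsupp.single v 1 : α →₀ ℕ).support = A := by
  classical
  ext v
  simp [Finsupp.single_apply]

theorem support_sum_single_add [DecidableEq α] (A : Finset α) (m : α →₀ ℕ) :
    (∑ v ∈ A, Finsupp.single v 1 + m).support = m.support ∪ A := by
  ext v
  simp [Finsupp.single_apply, or_comm, imp_iff_not_or]

/-- The square-free monomial ideal generated by the `x_S` with `S ∈ U`. If `U` is an upper set,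
its monomials are those with support in `U`. -/
noncomputable def upperSetIdeal (U : Set (Finset α)) : Ideal (MvPolynomial α K) :=
  Ideal.span (xMon K '' U)

theorem mem_upperSetIdeal {U : Set (Finset α)} (hU : IsUpperSet U) {p : MvPolynomial α K} :
    p ∈ upperSetIdeal K U ↔ ∀ m ∈ p.support, m.support ∈ U := by
  have himage : xMon K '' U =
      (monomial · 1) '' ((fun A : Finset α => ∑ v ∈ A, Finsupp.single v 1) '' U) := by
    rw [Set.image_image]
    exact Set.image_congr fun A _ => xMon_eq_monomial K A
  rw [upperSetIdeal, himage, mem_ideal_span_monomial_image]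
  simp only [Set.exists_mem_image, sum_single_le_iff]
  exact forall₂_congr fun m _ => ⟨fun ⟨A, hA, hAm⟩ => hU hAm hA, fun hm => ⟨_, hm, subset_rfl⟩⟩

theorem monomial_mem_upperSetIdeal {U : Set (Finset α)} (hU : IsUpperSet U) {m : α →₀ ℕ} :
    monomial m 1 ∈ upperSetIdeal K U ↔ m.support ∈ U := by
  classical
  simp [mem_upperSetIdeal K hU, support_monomial]

theorem upperSetIdeal_mono {U U' : Set (Finset α)} (h : U ⊆ U') :
    upperSetIdeal K U ≤ upperSetIdeal K U' :=
  Ideal.span_mono (Set.image_mono h)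

theorem xMon_mul_mem_upperSetIdeal [DecidableEq α] {U : Set (Finset α)} (hU : IsUpperSet U)
    (A : Finset α) (q : MvPolynomial α K) :
    xMon K A * q ∈ upperSetIdeal K U ↔ q ∈ upperSetIdeal K {S | S ∪ A ∈ U} := by
  have hU' : IsUpperSet {S | S ∪ A ∈ U} :=
    fun _ _ hSS' hS => hU (Finset.union_subset_union_left hSS') hS
  rw [mem_upperSetIdeal K hU, mem_upperSetIdeal K hU', xMon_eq_monomial]
  refine ⟨fun h m hm => ?_, fun h m hm => ?_⟩
  · rw [Set.mem_ofPred_eq, ← support_sum_single_add]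
    refine h _ (mem_support_iff.2 ?_)
    rwa [coeff_monomial_mul, one_mul, ← mem_support_iff]
  · rw [mem_support_iff, coeff_monomial_mul', one_mul] at hm
    obtain ⟨hle, hm⟩ := ite_ne_right_iff.1 hm
    have := h _ (mem_support_iff.2 hm)
    rwa [Set.mem_ofPred_eq, ← support_sum_single_add, add_tsub_cancel_of_le hle] at this

theorem upperSetIdeal_union_Ici (U : Set (Finset α)) (A : Finset α) :
    upperSetIdeal K (U ∪ Set.Ici A) = upperSetIdeal K U ⊔ Ideal.span {xMon K A} := by
  have hIci : Ideal.span (xMon K '' Set.Ici A) = Ideal.span {xMon K A} := by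
    refine le_antisymm (Ideal.span_le.2 ?_) ?_
    · rintro _ ⟨B, hAB, rfl⟩
      exact Ideal.mem_span_singleton.2 (xMon_dvd_xMon K hAB)
    · exact (Ideal.span_singleton_le_iff_mem _).2
        (Ideal.subset_span ⟨A, Set.self_mem_Ici, rfl⟩)
  rw [upperSetIdeal, Set.image_union, Ideal.span_union, hIci, upperSetIdeal]

theorem upperSetIdeal_univ : upperSetIdeal K (Set.univ : Set (Finset α)) = ⊤ :=
  (Ideal.eq_top_iff_one _).2 ((mem_upperSetIdeal K isUpperSet_univ).2 fun _ _ => trivial)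

variable [DecidableEq α]

theorem facetIdealOf_pow_le (T : Finset (Finset α)) (hT : ∀ H ∈ T, H.Nonempty) (k : ℕ) :
    facetIdealOf K T ^ k ≤ Ideal.span ((monomial · (1 : K)) ''
      {s : α →₀ ℕ | (∀ v, s v ≤ 1) → s.support ∈ matchingUpperSet T k}) := by
  induction k with
  | zero =>
    rw [pow_zero, Ideal.one_eq_top, top_le_iff, Ideal.eq_top_iff_one]
    exact Ideal.subset_span ⟨0, fun _ => matchingUpperSet_zero T ▸ Set.mem_univ _, rfl⟩
  | succ k ih =>
    rw [pow_succ']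
    refine (Ideal.mul_mono_right ih).trans ?_
    rw [facetIdealOf, Ideal.span_mul_span', Ideal.span_le]
    rintro _ ⟨_, ⟨F, hF, rfl⟩, _, ⟨s, hs, rfl⟩, rfl⟩
    refine Ideal.subset_span ⟨∑ v ∈ F, Finsupp.single v 1 + s, fun hle => ?_, ?_⟩
    · have hadd : ∀ v, (∑ w ∈ F, Finsupp.single w 1 : α →₀ ℕ) v + s v ≤ 1 := hle
      have hFs : Disjoint s.support F := Finset.disjoint_left.2 fun v hvs hvF => by
        have hFv := (support_sum_single F).symm ▸ hvF
        have := hadd v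
        have := Finsupp.mem_support_iff.1 hvs
        have := Finsupp.mem_support_iff.1 hFv
        lia
      rw [support_sum_single_add]
      refine mem_matchingUpperSet_succ hF (hT F hF) Finset.subset_union_right ?_
      rw [Finset.union_sdiff_cancel_right hFs]
      exact hs fun v => le_of_add_le_right (hadd v)
    · simp only [xMon_eq_monomial, monomial_mul, one_mul]

theorem xMon_mem_facetIdealOf_pow_iff {T : Finset (Finset α)} (hT : ∀ H ∈ T, H.Nonempty) {k : ℕ}
    {A : Finset α} : xMon K A ∈ facetIdealOf K T ^ k ↔ A ∈ matchingUpperSet T k := by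
  constructor
  · intro hA
    have := facetIdealOf_pow_le K T hT k hA
    rw [mem_ideal_span_monomial_image, xMon_eq_monomial] at this
    obtain ⟨s, hs, hsA⟩ := this (∑ v ∈ A, Finsupp.single v 1) (by simp [mem_support_iff])
    refine isUpperSet_matchingUpperSet T k ?_ (hs fun v => (hsA v).trans ?_)
    · exact (Finsupp.support_mono hsA).trans (support_sum_single A).subset
    · simp only [Finsupp.coe_finsetSum, Finset.sum_apply, Finsupp.single_apply,
        Finset.sum_ite_eq']
      split_ifs <;> simp
  · rintro ⟨M, hM, rfl, hsub⟩
    have hprod : xMon K (M.biUnion id) = ∏ H ∈ M, xMon K H :=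
      Finset.prod_biUnion (t := id) fun H hH H' hH' hne => hM.disjoint hH hH' hne
    refine Ideal.mem_of_dvd _
      (xMon_dvd_xMon K (A := M.biUnion id) (Finset.biUnion_subset.2 hsub)) ?_
    rw [hprod, ← Finset.prod_const]
    exact Ideal.prod_mem_prod fun H hH => Ideal.subset_span ⟨H, hM.1 hH, rfl⟩

theorem sqfreePow_facetIdealOf {T : Finset (Finset α)} (hT : ∀ H ∈ T, H.Nonempty) (k : ℕ) :
    sqfreePow K (facetIdealOf K T) k = upperSetIdeal K (matchingUpperSet T k) := by
  refine congrArg Ideal.span (Set.ext fun p => ⟨?_, ?_⟩)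
  · rintro ⟨⟨A, rfl⟩, hA⟩
    exact ⟨A, (xMon_mem_facetIdealOf_pow_iff K hT).1 hA, rfl⟩
  · rintro ⟨A, hA, rfl⟩
    exact ⟨⟨A, rfl⟩, (xMon_mem_facetIdealOf_pow_iff K hT).2 hA⟩

end SquareFreeIdeals

section RegularSequences

open RingTheory.Sequence Pointwise

variable {R : Type*} [CommRing R]

theorem isWeaklyRegular_of_exact {M M' M'' : Type*} [AddCommGroup M] [Module R M]
    [AddCommGroup M'] [Module R M'] [AddCommGroup M''] [Module R M''] {f : M →ₗ[R] M'}
    {g : M' →ₗ[R] M''} (hf : Function.Injective f) (hfg : Function.Exact f g)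
    (hg : Function.Surjective g) {rs : List R} (hM : IsWeaklyRegular M rs)
    (hM'' : IsWeaklyRegular M'' rs) : IsWeaklyRegular M' rs := by
  induction rs generalizing M M' M'' with
  | nil => exact .nil R M'
  | cons r rs ih =>
    rw [isWeaklyRegular_cons_iff] at hM hM'' ⊢
    have hzero : Function.Exact (0 : PUnit →ₗ[R] M) f :=
      (LinearMap.exact_zero_iff_injective _ f).2 hf
    have hmap := QuotSMulTop.map_first_exact_on_four_term_exact_of_isSMulRegular_last
      hzero hfg hM''.1
    rw [map_zero, LinearMap.exact_zero_iff_injective] at hmap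
    exact ⟨isSMulRegular_of_range_eq_ker hf hfg.linearMap_ker_eq.symm hM.1 hM''.1,
      ih hmap (QuotSMulTop.map_exact r hfg hg) (QuotSMulTop.map_surjective r hg) hM.2 hM''.2⟩

/-- The identification of `(R ⧸ I) ⧸ r (R ⧸ I)` with `R ⧸ (I + ⟨r⟩)`. -/
noncomputable def quotSMulTopQuotientEquiv (I : Ideal R) (r : R) :
    QuotSMulTop r (R ⧸ I) ≃ₗ[R] R ⧸ I ⊔ Ideal.span {r} :=
  have hsmul : (r • ⊤ : Submodule R (R ⧸ I)) =
      Submodule.map (Submodule.mkQ I) (Ideal.span {r}) := by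
    rw [← Submodule.ideal_span_singleton_smul, ← Submodule.range_mkQ, LinearMap.range_eq_map,
      ← Submodule.map_smul'', Ideal.smul_eq_mul, Ideal.mul_top]
  (Submodule.quotEquivOfEq _ _ hsmul).trans
    (Submodule.quotientQuotientEquivQuotientSup I (Ideal.span {r}))

theorem isWeaklyRegular_quotient_cons_iff {I : Ideal R} {r : R} {rs : List R} :
    IsWeaklyRegular (R ⧸ I) (r :: rs) ↔
      (∀ p, r * p ∈ I → p ∈ I) ∧ IsWeaklyRegular (R ⧸ I ⊔ Ideal.span {r}) rs := by
  rw [isWeaklyRegular_cons_iff, isSMulRegular_quotient_iff_mem_of_smul_mem,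
    (quotSMulTopQuotientEquiv I r).isWeaklyRegular_congr]
  rfl

theorem isWeaklyRegular_quotient_of_colon {I J : Ideal R} {a : R} (hJ : ∀ q, a * q ∈ I ↔ q ∈ J)
    {rs : List R} (hcolon : IsWeaklyRegular (R ⧸ J) rs)
    (hsup : IsWeaklyRegular (R ⧸ I ⊔ Ideal.span {a}) rs) : IsWeaklyRegular (R ⧸ I) rs := by
  let f : R ⧸ J →ₗ[R] R ⧸ I := Submodule.mapQ J I (LinearMap.mulLeft R a) fun q => (hJ q).2
  have hf : Function.Injective f := by
    refine (injective_iff_map_eq_zero f).2 fun x => ?_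
    obtain ⟨q, rfl⟩ := Submodule.mkQ_surjective J x
    exact fun hq => (Submodule.Quotient.mk_eq_zero J).2
      ((hJ q).1 ((Submodule.Quotient.mk_eq_zero I).1 hq))
  have hrange : LinearMap.range f = a • ⊤ := by
    ext y
    rw [LinearMap.mem_range, Submodule.mem_smul_pointwise_iff_exists,
      (Submodule.mkQ_surjective J).exists, (Submodule.mkQ_surjective I).exists]
    simp only [Submodule.mem_top, true_and]
    rfl
  refine isWeaklyRegular_of_exact hf ?_ (Submodule.mkQ_surjective (a • ⊤)) hcolon
    (((quotSMulTopQuotientEquiv I a).isWeaklyRegular_congr rs).2 hsup)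
  rw [LinearMap.exact_iff, Submodule.ker_mkQ, hrange]

theorem isRegular_quotient_of_isWeaklyRegular {I J : Ideal R} (hJ : J ≠ ⊤) (hI : I ≤ J)
    {rs : List R} (hrs : ∀ r ∈ rs, r ∈ J) (h : IsWeaklyRegular (R ⧸ I) rs) :
    IsRegular (R ⧸ I) rs := by
  refine ⟨h, fun htop => hJ (top_le_iff.1 ?_)⟩
  have hofList : Ideal.ofList rs ≤ J := Ideal.span_le.2 hrs
  have hmap : Submodule.map (Submodule.mkQ I) ⊤ ≤ Submodule.map (Submodule.mkQ I) J := by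
    rw [Submodule.map_top, Submodule.range_mkQ, htop, ← Submodule.range_mkQ,
      LinearMap.range_eq_map, ← Submodule.map_smul'', Ideal.smul_eq_mul, Ideal.mul_top]
    exact Submodule.map_mono hofList
  rwa [Submodule.map_le_iff_le_comap, Submodule.comap_map_mkQ, sup_eq_right.2 hI] at hmap

theorem length_le_supportDim [IsNoetherianRing R] {M : Type*} [AddCommGroup M] [Module R M]
    [Module.Finite R M] {rs : List R} (h : IsRegular M rs) :
    (rs.length : WithBot ℕ∞) ≤ Module.supportDim R M := by
  induction rs generalizing M with
  | nil =>
    have := h.nontrivial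
    have := Module.nonempty_support_of_nontrivial (R := R) (M := M) |>.to_subtype
    exact Order.krullDim_nonneg
  | cons r rs ih =>
    obtain ⟨hr, hrs⟩ := (isRegular_cons_iff M r rs).1 h
    have hsucc : Module.supportDim R (QuotSMulTop r M) + 1 ≤ Module.supportDim R M :=
      Module.supportDim_quotSMulTop_succ_le_of_notMem_minimalPrimes fun _ hp =>
        hr.notMem_of_mem_minimalPrimes hp
    rw [List.length_cons, Nat.cast_add_one]
    exact (add_le_add_left (ih hrs) 1).trans hsucc

end RegularSequences

section KrullDimension

variable {K}

theorem ringKrullDim_quotient_le_of_forall_isPrime {R : Type*} [CommRing R] {I : Ideal R}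
    {n : WithBot ℕ∞} (h : ∀ P : Ideal R, P.IsPrime → I ≤ P → ringKrullDim (R ⧸ P) ≤ n) :
    ringKrullDim (R ⧸ I) ≤ n := by
  rw [ringKrullDim_quotient]
  refine iSup_le fun s => ?_
  have hhead := h s.head.1.asIdeal s.head.1.isPrime s.head.2
  rw [ringKrullDim_quotient] at hhead
  let t : LTSeries (PrimeSpectrum.zeroLocus (s.head.1.asIdeal : Set R)) :=
    { length := s.length
      toFun := fun i => ⟨(s i).1, s.head_le i⟩
      step := s.step }
  exact (Order.LTSeries.length_le_krullDim t).trans hhead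

theorem ringKrullDim_quotient_le_of_forall_X_mem {α : Type} [Fintype α]
    {P : Ideal (MvPolynomial α K)} {C : Finset α} (hC : ∀ v ∈ C, (X v : MvPolynomial α K) ∈ P) :
    ringKrullDim (MvPolynomial α K ⧸ P) ≤ (Fintype.card α - C.card : ℕ) := by
  classical
  let f : MvPolynomial {v // v ∉ C} K →ₐ[K] MvPolynomial α K ⧸ P :=
    (Ideal.Quotient.mkₐ K P).comp (rename Subtype.val)
  let g : MvPolynomial α K →ₐ[K] MvPolynomial {v // v ∉ C} K :=
    aeval fun v => if hv : v ∈ C then 0 else X ⟨v, hv⟩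
  have hfg : f.comp g = Ideal.Quotient.mkₐ K P := algHom_ext fun v => by
    by_cases hv : v ∈ C
    · simpa [f, g, hv] using (Ideal.Quotient.eq_zero_iff_mem.2 (hC v hv)).symm
    · simp [f, g, hv]
  have hf : Function.Surjective f := Function.Surjective.of_comp (g := g) <| by
    rw [← AlgHom.coe_comp, hfg]
    exact Ideal.Quotient.mkₐ_surjective K P
  refine (ringKrullDim_le_of_surjective f.toRingHom hf).trans_eq ?_
  rw [ringKrullDim_of_isNoetherianRing, ringKrullDim_eq_zero_of_field, zero_add,
    Nat.card_eq_fintype_card, Fintype.card_subtype_compl, Fintype.card_coe]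

theorem HasPrimeFiltration.exists_card_eq_forall_X_mem {α : Type} [DecidableEq α] {c : ℕ}
    {U : Set (Finset α)} (h : HasPrimeFiltration c U) {P : Ideal (MvPolynomial α K)}
    [hP : P.IsPrime] (hU : upperSetIdeal K U ≤ P) :
    ∃ C : Finset α, C.card = c ∧ ∀ v ∈ C, (X v : MvPolynomial α K) ∈ P := by
  induction h with
  | top => exact absurd (top_le_iff.1 (upperSetIdeal_univ K ▸ hU)) hP.ne_top
  | prime C =>
    refine ⟨C, rfl, fun v hv => hU (Ideal.subset_span ⟨{v}, ?_, Finset.prod_singleton _ _⟩)⟩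
    exact fun hdisj => Finset.disjoint_left.1 hdisj hv (Finset.mem_singleton_self v)
  | split A hUupper _ _ ihcolon ihsup =>
    by_cases hA : xMon K A ∈ P
    · refine ihsup ?_
      rw [upperSetIdeal_union_Ici]
      exact sup_le hU ((Ideal.span_singleton_le_iff_mem P).2 hA)
    · exact ihcolon fun q hq => (hP.mem_or_mem
        (hU ((xMon_mul_mem_upperSetIdeal K hUupper A q).2 hq))).resolve_left hA

theorem HasPrimeFiltration.ringKrullDim_le {c : ℕ} {U : Set (Finset V)}
    (h : HasPrimeFiltration c U) :
    ringKrullDim (MvPolynomial V K ⧸ upperSetIdeal K U) ≤ (Fintype.card V - c : ℕ) := by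
  refine ringKrullDim_quotient_le_of_forall_isPrime fun P _ hP => ?_
  obtain ⟨C, rfl, hC⟩ := h.exists_card_eq_forall_X_mem hP
  exact ringKrullDim_quotient_le_of_forall_X_mem hC

end KrullDimension

section Depth

open RingTheory.Sequence

theorem esymm_sub_xMon_compl_mem {C : Finset V} {d : ℕ} (hd : C.card + d = Fintype.card V) :
    esymm V K d - xMon K Cᶜ ∈ upperSetIdeal K (meetingUpperSet C) := by
  have hCd : Cᶜ.card = d := by rw [Finset.card_compl, ← hd, Nat.add_sub_cancel_left]
  have hmem : Cᶜ ∈ Finset.powersetCard d Finset.univ :=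
    Finset.mem_powersetCard.2 ⟨Finset.subset_univ _, hCd⟩
  have hesymm : esymm V K d = ∑ S ∈ Finset.powersetCard d Finset.univ, xMon K S := rfl
  rw [hesymm, ← Finset.add_sum_erase _ _ hmem, add_sub_cancel_left]
  refine Ideal.sum_mem _ fun S hS => Ideal.subset_span ⟨S, fun hdisj => ?_, rfl⟩
  obtain ⟨hne, hS⟩ := Finset.mem_erase.1 hS
  exact hne (Finset.eq_of_subset_of_card_le (Finset.subset_compl_iff_disjoint_left.2 hdisj)
    (hCd.trans_le (Finset.mem_powersetCard.1 hS).2.ge))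

theorem mem_upperSetIdeal_of_esymm_mul_mem {α : Type} [Fintype α] {C : Finset α} {d : ℕ}
    (hd : C.card + d = Fintype.card α) {p : MvPolynomial α K}
    (hp : esymm α K d * p ∈ upperSetIdeal K (meetingUpperSet C)) :
    p ∈ upperSetIdeal K (meetingUpperSet C) := by
  classical
  have hcompl : xMon K Cᶜ * p ∈ upperSetIdeal K (meetingUpperSet C) := by
    have := Ideal.sub_mem _ hp (Ideal.mul_mem_right p _ (esymm_sub_xMon_compl_mem K hd))
    rwa [← sub_mul, sub_sub_cancel] at this
  have hcolon : {S | S ∪ Cᶜ ∈ meetingUpperSet C} ⊆ meetingUpperSet C := fun S hS hdisj =>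
    hS (Finset.disjoint_union_right.2 ⟨hdisj, disjoint_compl_right⟩)
  exact upperSetIdeal_mono K hcolon
    ((xMon_mul_mem_upperSetIdeal K (isUpperSet_meetingUpperSet C) _ _).1 hcompl)

theorem upperSetIdeal_meetingUpperSet_sup_span_esymm {C : Finset V} {d : ℕ}
    (hd : C.card + d = Fintype.card V) :
    upperSetIdeal K (meetingUpperSet C) ⊔ Ideal.span {esymm V K d} =
      upperSetIdeal K (meetingUpperSet C ∪ Set.Ici Cᶜ) := by
  have hsub := esymm_sub_xMon_compl_mem K hd
  rw [upperSetIdeal_union_Ici]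
  refine le_antisymm (sup_le le_sup_left ?_) (sup_le le_sup_left ?_) <;>
    rw [Ideal.span_singleton_le_iff_mem]
  · exact (Submodule.sub_mem_iff_left _
      (Ideal.mem_sup_right (Ideal.mem_span_singleton_self _))).1 (Ideal.mem_sup_left hsub)
  · exact (Submodule.sub_mem_iff_right _
      (Ideal.mem_sup_right (Ideal.mem_span_singleton_self _))).1 (Ideal.mem_sup_left hsub)

/-- The elementary symmetric polynomials `e_d, …, e_1`, the regular sequence computing the depth. -/
noncomputable def esymmList (α : Type) [Fintype α] (K : Type) [Field K] :
    ℕ → List (MvPolynomial α K)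
  | 0 => []
  | d + 1 => esymm α K (d + 1) :: esymmList α K d

theorem length_esymmList {α : Type} [Fintype α] (d : ℕ) : (esymmList α K d).length = d := by
  induction d with
  | zero => rfl
  | succ d ih => rw [esymmList, List.length_cons, ih]

theorem xMon_mem_span_range_X {α : Type} {S : Finset α} (hS : S.Nonempty) :
    xMon K S ∈ Ideal.span (Set.range (X : α → MvPolynomial α K)) := by
  obtain ⟨v, hv⟩ := hS
  exact Ideal.mem_of_dvd _ (Finset.dvd_prod_of_mem X hv) (Ideal.subset_span ⟨v, rfl⟩)

theorem mem_span_range_X_of_mem_esymmList {α : Type} [Fintype α] {d : ℕ} {p : MvPolynomial α K}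
    (hp : p ∈ esymmList α K d) : p ∈ Ideal.span (Set.range (X : α → MvPolynomial α K)) := by
  induction d with
  | zero => exact absurd hp List.not_mem_nil
  | succ d ih =>
    obtain rfl | hp := List.mem_cons.1 hp
    · refine Ideal.sum_mem _ fun S hS => xMon_mem_span_range_X K (Finset.card_pos.1 ?_)
      exact (Finset.mem_powersetCard.1 hS).2 ▸ d.succ_pos
    · exact ih hp

theorem HasPrimeFiltration.isWeaklyRegular_esymmList {c d : ℕ} {U : Set (Finset V)}
    (h : HasPrimeFiltration c U) (hcd : c + d = Fintype.card V) :
    IsWeaklyRegular (MvPolynomial V K ⧸ upperSetIdeal K U) (esymmList V K d) := by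
  induction d generalizing c U with
  | zero => exact .nil _ _
  | succ d ihd =>
    induction h with
    | top c =>
      rw [upperSetIdeal_univ]
      exact ⟨fun _ _ => Function.injective_of_subsingleton _⟩
    | prime C =>
      refine isWeaklyRegular_quotient_cons_iff.2
        ⟨fun p => mem_upperSetIdeal_of_esymm_mul_mem K hcd, ?_⟩
      rw [upperSetIdeal_meetingUpperSet_sup_span_esymm K hcd]
      exact ihd (.meetingUpperSet_union_Ici Cᶜ C disjoint_compl_left) (by lia)
    | split A hU _ _ ihcolon ihsup =>
      refine isWeaklyRegular_quotient_of_colon (xMon_mul_mem_upperSetIdeal K hU A)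
        (ihcolon hcd) ?_
      rw [← upperSetIdeal_union_Ici]
      exact ihsup hcd

theorem span_range_X_eq_ker_constantCoeff {α : Type} :
    Ideal.span (Set.range (X : α → MvPolynomial α K)) = RingHom.ker constantCoeff := by
  refine le_antisymm (Ideal.span_le.2 ?_) fun p hp => ?_
  · rintro _ ⟨v, rfl⟩
    exact constantCoeff_X _ v
  · rw [← Set.image_univ, mem_ideal_span_X_image]
    intro m hm
    by_contra! hzero
    refine mem_support_iff.1 hm ?_
    rw [show m = 0 from Finsupp.ext fun v => hzero v trivial]
    exact hp

theorem isPrime_span_range_X {α : Type} :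
    (Ideal.span (Set.range (X : α → MvPolynomial α K))).IsPrime :=
  span_range_X_eq_ker_constantCoeff K ▸ RingHom.ker_isPrime _

theorem HasPrimeFiltration.gradedDepth_add {c : ℕ} {U : Set (Finset V)}
    (h : HasPrimeFiltration c U) (hU : ∅ ∉ U) :
    gradedDepth K (upperSetIdeal K U) + c = Fintype.card V := by
  have hprime := isPrime_span_range_X K (α := V)
  have hle : upperSetIdeal K U ≤ Ideal.span (Set.range (X : V → MvPolynomial V K)) := by
    refine Ideal.span_le.2 ?_
    rintro _ ⟨S, hS, rfl⟩
    exact xMon_mem_span_range_X K (Finset.nonempty_iff_ne_empty.2 fun hempty => hU (hempty ▸ hS))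
  obtain ⟨C, hC, -⟩ := h.exists_card_eq_forall_X_mem hle
  have hc : c + (Fintype.card V - c) = Fintype.card V :=
    Nat.add_sub_cancel' (hC ▸ C.card_le_univ)
  suffices hdepth : gradedDepth K (upperSetIdeal K U) = Fintype.card V - c by lia
  refine IsGreatest.csSup_eq ⟨⟨esymmList V K _, length_esymmList K _,
    fun _ => mem_span_range_X_of_mem_esymmList K, ?_⟩, ?_⟩
  · exact isRegular_quotient_of_isWeaklyRegular hprime.ne_top hle
      (fun _ => mem_span_range_X_of_mem_esymmList K) (h.isWeaklyRegular_esymmList K hc)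
  · rintro _ ⟨rs, rfl, -, hrs⟩
    have hdim := (length_le_supportDim hrs).trans_eq (Module.supportDim_quotient_eq_ringKrullDim _)
    exact_mod_cast hdim.trans h.ringKrullDim_le

end Depth

section NormalizedDepth

theorem exists_isMatchingOf_card_eq {α : Type} [DecidableEq α] {T : Finset (Finset α)} {k : ℕ}
    (hk : k ≤ matchingNumberOf T) : ∃ M, IsMatchingOf T M ∧ M.card = k := by
  have hbdd : BddAbove {n | ∃ M, IsMatchingOf T M ∧ M.card = n} := by
    refine ⟨T.card, ?_⟩
    rintro _ ⟨M, hM, rfl⟩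
    exact Finset.card_le_card hM.1
  have hne : {n | ∃ M, IsMatchingOf T M ∧ M.card = n}.Nonempty :=
    ⟨0, ∅, by simp [IsMatchingOf], rfl⟩
  obtain ⟨M, hM, hcard⟩ := Nat.sSup_mem hne hbdd
  obtain ⟨M', hM', hcard'⟩ := Finset.exists_subset_card_eq (hk.trans_eq hcard.symm)
  exact ⟨M', hM.of_subset hM' (hM'.trans hM.1), hcard'⟩

theorem empty_notMem_matchingUpperSet_succ {α : Type} [DecidableEq α] {T : Finset (Finset α)}
    (hT : ∀ H ∈ T, H.Nonempty) (k : ℕ) : ∅ ∉ matchingUpperSet T (k + 1) := fun h => by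
  obtain ⟨S, -, hlt⟩ := exists_mem_matchingUpperSet_card_lt hT h
  exact Nat.not_lt_zero _ hlt

theorem IsGraftedOver.gradedDepth_sqfreePow_add {P T : Finset (Finset V)} (h : IsGraftedOver P T)
    {k : ℕ} (hk : k ≤ P.card) :
    gradedDepth K (sqfreePow K (facetIdealOf K T) (k + 1)) + P.card = Fintype.card V + k := by
  have hfilt := h.hasPrimeFiltration (Z := ∅) (c := P.card - k) (k := k + 1) (by simp) (by lia)
    (by rw [Finset.card_empty]; lia)
  have hmeet : meetingUpperSet (∅ : Finset V) = ∅ := by simp [meetingUpperSet]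
  rw [hmeet, Set.empty_union] at hfilt
  have := hfilt.gradedDepth_add K (empty_notMem_matchingUpperSet_succ h.nonempty k)
  rw [sqfreePow_facetIdealOf K h.nonempty]
  lia

theorem minGenDegree_le_card {α : Type} {U : Set (Finset α)} {S : Finset α} (hS : S ∈ U) :
    minGenDegree K (upperSetIdeal K U) ≤ S.card := by
  refine Nat.sInf_le ⟨∑ v ∈ S, Finsupp.single v 1, ?_, ?_⟩
  · rw [← xMon_eq_monomial]
    exact Ideal.subset_span ⟨S, hS, rfl⟩
  · change Finsupp.degree _ = _
    simp

theorem exists_card_le_minGenDegree {α : Type} {U : Set (Finset α)}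
    (hU : IsUpperSet U) (hne : U.Nonempty) :
    ∃ S ∈ U, S.card ≤ minGenDegree K (upperSetIdeal K U) := by
  obtain ⟨S, hS⟩ := hne
  obtain ⟨m, hm, hdeg⟩ := Nat.sInf_mem (s := {n | ∃ s : α →₀ ℕ,
    monomial s (1 : K) ∈ upperSetIdeal K U ∧ s.sum (fun _ e => e) = n})
    ⟨_, ∑ v ∈ S, Finsupp.single v 1, (xMon_eq_monomial K S) ▸ Ideal.subset_span ⟨S, hS, rfl⟩, rfl⟩
  refine ⟨m.support, (monomial_mem_upperSetIdeal K hU).1 hm, ?_⟩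
  rw [minGenDegree, ← hdeg]
  exact Finset.card_eq_sum_ones m.support ▸
    Finset.sum_le_sum fun v hv => Nat.one_le_iff_ne_zero.2 (Finsupp.mem_support_iff.1 hv)

theorem minGenDegree_sqfreePow_lt {α : Type} [DecidableEq α] {T : Finset (Finset α)}
    (hT : ∀ H ∈ T, H.Nonempty) {k : ℕ} (hk : k + 1 ≤ matchingNumberOf T) :
    minGenDegree K (sqfreePow K (facetIdealOf K T) k) <
      minGenDegree K (sqfreePow K (facetIdealOf K T) (k + 1)) := by
  obtain ⟨M, hM, hcard⟩ := exists_isMatchingOf_card_eq hk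
  rw [sqfreePow_facetIdealOf K hT, sqfreePow_facetIdealOf K hT]
  obtain ⟨S, hS, hle⟩ := exists_card_le_minGenDegree K (isUpperSet_matchingUpperSet T (k + 1))
    ⟨M.biUnion id, M, hM, hcard, fun _ hH => Finset.subset_biUnion_of_mem id hH⟩
  obtain ⟨S', hS', hlt⟩ := exists_mem_matchingUpperSet_card_lt hT hS
  exact (minGenDegree_le_card K hS').trans_lt (hlt.trans_le hle)

end NormalizedDepth

theorem stmt5 (Δ : SimplicialComplexOn V)
    (hcov : ∀ v : V, ∃ F ∈ Δ.facets, v ∈ F)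
    (hCM : IsCMForestFacets Δ.facets) :
    ∀ k : ℕ, 1 ≤ k → k + 1 ≤ matchingNumberOf Δ.facets →
      (gradedDepth K (sqfreePow K (facetIdealOf K Δ.facets) (k + 1)) : ℤ) -
          ((minGenDegree K (sqfreePow K (facetIdealOf K Δ.facets) (k + 1)) : ℤ) - 1) ≤
        (gradedDepth K (sqfreePow K (facetIdealOf K Δ.facets) k) : ℤ) -
          ((minGenDegree K (sqfreePow K (facetIdealOf K Δ.facets) k) : ℤ) - 1) := by
  intro k hk hkm
  obtain ⟨P, hP⟩ := hCM.exists_isGraftedOver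
    (fun F hF G hG hne hFG => hne (Δ.antichain F hF G hG hFG)) Δ.nonempty_facet
  obtain ⟨M, hM, hcard⟩ := exists_isMatchingOf_card_eq hkm
  have hkP : k + 1 ≤ P.card := hcard ▸ hP.card_le_of_isMatchingOf hM
  obtain ⟨k, rfl⟩ := Nat.exists_eq_add_of_le' hk
  have depth := hP.gradedDepth_sqfreePow_add K (k := k) (by lia)
  have depth_succ := hP.gradedDepth_sqfreePow_add K (k := k + 1) (by lia)
  have degree_lt := minGenDegree_sqfreePow_lt K Δ.nonempty_facet hkm
  lia

end Statements
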